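/- For every integer n ≥ 2 (with the convention Z_0(x,y) = 1), the alternative adjacent-boundary doubly-refined ASM generating function satisfies the recursion: (z1−1)(z2−1)·Zbaradj_n(x,y;z1,z2)·Z_{n−2}(x,y) = y·z1·z2·Zbaradj_{n−1}(x,y;z1,z2)·Z_{n−1}(x,y) + ((z1−1)(z2−1)−y·z1·z2)·Z_{n−1}(x,y;z1)·Z_{n−1}(x,y;z2) + (z1−1)(z2−1)·(x·z1·z2)^{n−1}·Z_{n−1}(x,y)·Z_{n−2}(x,y), as an identity of polynomials in ℤ[x,y,z1,z2]. -/

import Mathlib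

open Finset

/-- The `n × n` integer matrix encoded by `e`, with entries in `{-1, 0, 1}`. -/
def asmMat {n : ℕ} (e : Fin n → Fin n → Fin 3) : Fin n → Fin n → ℤ :=
  fun i j => (e i j : ℤ) - 1

/-- `A` is an alternating sign matrix: all entries lie in `{-1, 0, 1}`, every
partial row sum and every partial column sum is `0` or `1` (equivalently, the
nonzero entries of each row and of each column alternate in sign), and every
complete row sum and column sum is `1`. -/
def IsASM {n : ℕ} (A : Fin n → Fin n → ℤ) : Prop :=
  (∀ i j, A i j = -1 ∨ A i j = 0 ∨ A i j = 1) ∧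
  (∀ (i j : Fin n), (∑ j' ∈ univ.filter (fun j' : Fin n => j' ≤ j), A i j') = 0 ∨
    (∑ j' ∈ univ.filter (fun j' : Fin n => j' ≤ j), A i j') = 1) ∧
  (∀ (i j : Fin n), (∑ i' ∈ univ.filter (fun i' : Fin n => i' ≤ i), A i' j) = 0 ∨
    (∑ i' ∈ univ.filter (fun i' : Fin n => i' ≤ i), A i' j) = 1) ∧
  (∀ i : Fin n, (∑ j, A i j) = 1) ∧
  (∀ j : Fin n, (∑ i, A i j) = 1)

/-- `ν(A)`, the number of generalized inversions of `A`. -/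
def nuASM {n : ℕ} (A : Fin n → Fin n → ℤ) : ℕ :=
  (∑ i : Fin n, ∑ i' : Fin n, ∑ j : Fin n, ∑ j' : Fin n,
      if i < i' ∧ j' ≤ j then A i j * A i' j' else 0).toNat

/-- `μ(A)`, the number of entries of `A` equal to `-1`. -/
def muASM {n : ℕ} (A : Fin n → Fin n → ℤ) : ℕ :=
  (univ.filter (fun p : Fin n × Fin n => A p.1 p.2 = -1)).card

/-- `ρT(A)`, the number of `0`'s to the left of the `1` in the top row of `A`. -/
def rhoT {n : ℕ} (A : Fin n → Fin n → ℤ) : ℕ :=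
  (univ.filter (fun j : Fin n =>
    A ⟨0, j.pos⟩ j = 0 ∧ ∃ j' : Fin n, j < j' ∧ A ⟨0, j.pos⟩ j' = 1)).card

/-- `ρR(A)`, the number of `0`'s below the `1` in the right-most column of `A`. -/
def rhoR {n : ℕ} (A : Fin n → Fin n → ℤ) : ℕ :=
  (univ.filter (fun i : Fin n =>
    A i ⟨n - 1, Nat.sub_lt i.pos Nat.one_pos⟩ = 0 ∧
      ∃ i' : Fin n, i' < i ∧ A i' ⟨n - 1, Nat.sub_lt i.pos Nat.one_pos⟩ = 1)).card

/-- `ρB(A)`, the number of `0`'s to the right of the `1` in the bottom row of `A`. -/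
def rhoB {n : ℕ} (A : Fin n → Fin n → ℤ) : ℕ :=
  (univ.filter (fun j : Fin n =>
    A ⟨n - 1, Nat.sub_lt j.pos Nat.one_pos⟩ j = 0 ∧
      ∃ j' : Fin n, j' < j ∧ A ⟨n - 1, Nat.sub_lt j.pos Nat.one_pos⟩ j' = 1)).card

/-- `ρL(A)`, the number of `0`'s above the `1` in the left-most column of `A`. -/
def rhoL {n : ℕ} (A : Fin n → Fin n → ℤ) : ℕ :=
  (univ.filter (fun i : Fin n =>
    A i ⟨0, i.pos⟩ = 0 ∧ ∃ i' : Fin n, i < i' ∧ A i' ⟨0, i.pos⟩ = 1)).card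

open Classical in
/-- The quadruply-refined ASM generating function
`Zqua_n(x,y;z1,z2,z3,z4) = Σ_A x^{ν(A)} y^{μ(A)} z1^{ρT(A)} z2^{ρR(A)} z3^{ρB(A)} z4^{ρL(A)}`. -/
noncomputable def Zqua (n : ℕ) {R : Type*} [CommRing R] (x y z1 z2 z3 z4 : R) : R :=
  ∑ e : Fin n → Fin n → Fin 3,
    if IsASM (asmMat e) then
      x ^ nuASM (asmMat e) * y ^ muASM (asmMat e) * z1 ^ rhoT (asmMat e) *
        z2 ^ rhoR (asmMat e) * z3 ^ rhoB (asmMat e) * z4 ^ rhoL (asmMat e)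
    else 0

/-- Adjacent-boundary doubly-refined generating function `Zadj_n(x,y;z1,z2)`. -/
noncomputable def Zadj (n : ℕ) {R : Type*} [CommRing R] (x y z1 z2 : R) : R :=
  Zqua n x y z1 1 1 z2

/-- Alternative adjacent-boundary doubly-refined generating function `Zbaradj_n(x,y;z1,z2)`. -/
noncomputable def Zbaradj (n : ℕ) {R : Type*} [CommRing R] (x y z1 z2 : R) : R :=
  Zqua n x y z1 z2 1 1

/-- Triply-refined generating function `Ztri_n(x,y;z1,z2,z3)`. -/
noncomputable def Ztri (n : ℕ) {R : Type*} [CommRing R] (x y z1 z2 z3 : R) : R :=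
  Zqua n x y z1 1 z2 z3

/-- Opposite-boundary doubly-refined generating function `Zopp_n(x,y;z1,z2)`. -/
noncomputable def Zopp (n : ℕ) {R : Type*} [CommRing R] (x y z1 z2 : R) : R :=
  Zqua n x y z1 1 z2 1

/-- Singly-refined generating function `Z_n(x,y;z)`. -/
noncomputable def Zsing (n : ℕ) {R : Type*} [CommRing R] (x y z : R) : R :=
  Zqua n x y z 1 1 1

/-- Unrefined generating function `Z_n(x,y)`.  Note `Zun 0 x y = 1`. -/
noncomputable def Zun (n : ℕ) {R : Type*} [CommRing R] (x y : R) : R :=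
  Zqua n x y 1 1 1 1

/-!
Sites of an alternating sign matrix are weighted as in the six-vertex model with domain-wall
boundary. For the integrable weights the Yang–Baxter equation makes the partition function symmetric
in its row parameters; as a polynomial in one column parameter it is then determined by enough
special values, and this yields the Izergin–Korepin determinant. The Desnanot–Jacobi identity for
that determinant is a bilinear relation between partition functions of three successive sizes.

If all row parameters but the first and all column parameters but the last are equal, the only
row-dependent or column-dependent weights are those of the first row and of the last column, and a
gauge transformation turns them into the statistics `ρT` and `ρR`, except for the weight of an entry
`1` at the top right corner. This exception contributes the term `(x z1 z2)^(n-1) Z_(n-1)`. Real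
`x > 1` and `y, z1, z2 < 0` all arise from such parameters, and an integer polynomial which vanishes
at all those points is zero.
-/

namespace SixVertex

section Configurations

/-- The integer in `{-1, 0, 1}` encoded by an element of `Fin 3`, as in `asmMat`. -/
def entry (x : Fin 3) : ℤ := (x : ℤ) - 1

@[simp] lemma entry_zero : entry 0 = -1 := rfl

@[simp] lemma entry_one : entry 1 = 0 := rfl

@[simp] lemma entry_two : entry 2 = 1 := rfl

/-- The sum of the values of `f` strictly before `j`. For the entries of a row (or column) of an
alternating sign matrix it is the state of the edge by which that line enters site `j`. -/
def sumBefore {n : ℕ} (f : Fin n → ℤ) (j : Fin n) : ℤ := ∑ k with k < j, f k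

@[simp] lemma sumBefore_zero {n : ℕ} (f : Fin (n + 1) → ℤ) : sumBefore f 0 = 0 := by
  simp [sumBefore]

@[simp] lemma sumBefore_succ {n : ℕ} (f : Fin (n + 1) → ℤ) (j : Fin n) :
    sumBefore f j.succ = f 0 + sumBefore (fun k => f k.succ) j := by
  simp [sumBefore, sum_filter, Fin.sum_univ_succ]

@[simp] lemma sumBefore_castSucc {n : ℕ} (f : Fin (n + 1) → ℤ) (j : Fin n) :
    sumBefore f j.castSucc = sumBefore (fun k => f k.castSucc) j := by
  simp [sumBefore, sum_filter, Fin.sum_univ_castSucc, (Fin.castSucc_lt_last j).le]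

@[simp] lemma sumBefore_last {n : ℕ} (f : Fin (n + 1) → ℤ) :
    sumBefore f (Fin.last n) = ∑ k : Fin n, f k.castSucc := by
  simp [sumBefore, sum_filter, Fin.sum_univ_castSucc]

variable {α M : Type*} [Fintype α] [AddCommMonoid M]

lemma sum_fin_cons {n : ℕ} (f : (Fin (n + 1) → α) → M) :
    ∑ e, f e = ∑ a, ∑ r, f (Fin.cons a r) := by
  rw [← (Fin.consEquiv fun _ : Fin (n + 1) => α).sum_comp, Fintype.sum_prod_type]
  rfl

lemma sum_fin_snoc {n : ℕ} (f : (Fin (n + 1) → α) → M) :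
    ∑ e, f e = ∑ r, ∑ a, f (Fin.snoc r a) := by
  rw [← (Fin.snocEquiv fun _ : Fin (n + 1) => α).sum_comp, Fintype.sum_prod_type_right]
  rfl

end Configurations

section Weights

/-- The weights of one site of the six-vertex model: `a` and `b` for the entry `0` with equal and
with different incoming edges, `c` for the entry `1` and `d` for the entry `-1`. -/
structure VertexWeights (R : Type*) where
  /-- The weight of the entry `0` with equal incoming edges. -/
  a : R
  /-- The weight of the entry `0` with different incoming edges. -/
  b : R
  /-- The weight of the entry `1`. -/
  c : R
  /-- The weight of the entry `-1`. -/
  d : R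

/-- The ice rule at a site with left edge `h`, top edge `v` and entry `e`: the four edges, of which
the right one is `h + e` and the bottom one `v + e`, have states `0` or `1`. -/
def IsIce (h v e : ℤ) : Prop :=
  (h = 0 ∨ h = 1) ∧ (h + e = 0 ∨ h + e = 1) ∧ (v = 0 ∨ v = 1) ∧ (v + e = 0 ∨ v + e = 1)

instance (h v e : ℤ) : Decidable (IsIce h v e) := by unfold IsIce; infer_instance

namespace VertexWeights

variable {R S : Type*}

/-- The weight of the entry `e` at a site with left edge `h` and top edge `v`. -/
def weight [Zero R] (w : VertexWeights R) (h v e : ℤ) : R :=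
  if IsIce h v e then
    if e = 1 then w.c else if e = -1 then w.d else if h = v then w.a else w.b
  else 0

/-- The image of vertex weights under a map of coefficients. -/
def map (φ : R → S) (w : VertexWeights R) : VertexWeights S := ⟨φ w.a, φ w.b, φ w.c, φ w.d⟩

lemma map_weight [Semiring R] [Semiring S] (φ : R →+* S) (w : VertexWeights R) (h v e : ℤ) :
    φ (w.weight h v e) = (w.map φ).weight h v e := by
  simp only [weight, map, apply_ite φ, map_zero]

variable [Zero R] (w : VertexWeights R)

@[simp] lemma weight_zero_zero_zero : w.weight 0 0 0 = w.a := rfl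

lemma weight_zero_top_neg_one (h : ℤ) : w.weight h 0 (-1) = 0 :=
  if_neg (by simp [IsIce])

lemma weight_of_right_eq_one_top_eq_one (h e : ℤ) :
    (if h + e = 1 then w.weight h 1 e else 0) = if h = 1 ∧ e = 0 then w.a else 0 := by
  unfold weight IsIce
  grind

lemma weight_of_right_eq_one_top_eq_zero (h e : ℤ) :
    (if h + e = 1 then w.weight h 0 e else 0) =
      if h = 1 ∧ e = 0 then w.b else if h = 0 ∧ e = 1 then w.c else 0 := by
  unfold weight IsIce
  grind

end VertexWeights

end Weights

section PartitionFunction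

variable {R : Type*} [CommSemiring R] {k m : ℕ}

/-- The weight of the row `r`, entered from the left by the edge `h` and from the top by the
edges `σ`. -/
def rowWeight (W : Fin m → VertexWeights R) (h : ℤ) (σ : Fin m → ℤ) (r : Fin m → Fin 3) : R :=
  ∏ j, (W j).weight (h + sumBefore (fun k => entry (r k)) j) (σ j) (entry (r j))

/-- The partition function of the six-vertex model with site weights `W`, top edges `σ`, left edges
`0`, and right and bottom edges `1`. -/
def partitionFunction (W : Fin k → Fin m → VertexWeights R) (σ : Fin m → ℤ) : R :=
  ∑ e : Fin k → Fin m → Fin 3,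
    if (∀ i, ∑ j, entry (e i j) = 1) ∧ ∀ j, σ j + ∑ i, entry (e i j) = 1 then
      ∏ i, rowWeight (W i) 0 (fun j => σ j + sumBefore (fun i' => entry (e i' j)) i) (e i)
    else 0

lemma map_partitionFunction {S : Type*} [CommSemiring S] (φ : R →+* S)
    (W : Fin k → Fin m → VertexWeights R) (σ : Fin m → ℤ) :
    φ (partitionFunction W σ) = partitionFunction (fun i j => (W i j).map φ) σ := by
  simp only [partitionFunction, rowWeight, map_sum, apply_ite φ, map_prod, map_zero,
    VertexWeights.map_weight]

lemma rowWeight_cons (W : Fin (m + 1) → VertexWeights R) (h : ℤ) (σ : Fin (m + 1) → ℤ)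
    (a : Fin 3) (r : Fin m → Fin 3) :
    rowWeight W h σ (Fin.cons a r) = (W 0).weight h (σ 0) (entry a) *
      rowWeight (fun j => W j.succ) (h + entry a) (fun j => σ j.succ) r := by
  simp [rowWeight, Fin.prod_univ_succ, add_assoc]

lemma rowWeight_snoc (W : Fin (m + 1) → VertexWeights R) (h : ℤ) (σ : Fin (m + 1) → ℤ)
    (r : Fin m → Fin 3) (a : Fin 3) :
    rowWeight W h σ (Fin.snoc r a) =
      rowWeight (fun j => W j.castSucc) h (fun j => σ j.castSucc) r *
        (W (Fin.last m)).weight (h + ∑ j, entry (r j)) (σ (Fin.last m)) (entry a) := by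
  simp [rowWeight, Fin.prod_univ_castSucc]

lemma partitionFunction_succ (W : Fin (k + 1) → Fin m → VertexWeights R) (σ : Fin m → ℤ) :
    partitionFunction W σ = ∑ r : Fin m → Fin 3,
      (if ∑ j, entry (r j) = 1 then rowWeight (W 0) 0 σ r else 0) *
        partitionFunction (fun i => W i.succ) (fun j => σ j + entry (r j)) := by
  rw [partitionFunction, sum_fin_cons]
  refine sum_congr rfl fun r _ => ?_
  rw [partitionFunction, mul_sum]
  refine sum_congr rfl fun e _ => ?_
  by_cases hr : ∑ j, entry (r j) = 1 <;>
    simp [hr, Fin.forall_fin_succ, Fin.prod_univ_succ, Fin.sum_univ_succ, add_assoc]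

lemma sum_entry_snoc (r : Fin m → Fin 3) (x : Fin 3) :
    ∑ j, entry ((Fin.snoc r x : Fin (m + 1) → Fin 3) j) = ∑ j, entry (r j) + entry x := by
  simp [Fin.sum_univ_castSucc]

lemma entry_eq_one_of_pos {a : Fin 3} (h : 0 < entry a) : entry a = 1 := by
  revert a
  decide

lemma entry_eq_zero_iff (x : Fin 3) : entry x = 0 ↔ x = 1 := by
  decide +revert

lemma partitionFunction_of_last_top_eq_one (W : Fin k → Fin (m + 1) → VertexWeights R)
    (σ : Fin (m + 1) → ℤ) (hσ : σ (Fin.last m) = 1) :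
    partitionFunction W σ = (∏ i, (W i (Fin.last m)).a) *
      partitionFunction (fun i j => W i j.castSucc) (fun j => σ j.castSucc) := by
  induction k generalizing σ with
  | zero => simp [partitionFunction, Fin.forall_fin_succ', hσ]
  | succ k ih =>
    rw [partitionFunction_succ, partitionFunction_succ, sum_fin_snoc, mul_sum]
    refine sum_congr rfl fun r _ => ?_
    have hrow (x : Fin 3) : (if ∑ j, entry ((Fin.snoc r x : Fin (m + 1) → Fin 3) j) = 1 then
          rowWeight (W 0) 0 σ (Fin.snoc r x) else 0) =
        rowWeight (fun j => W 0 j.castSucc) 0 (fun j => σ j.castSucc) r *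
          if ∑ j, entry (r j) = 1 ∧ entry x = 0 then (W 0 (Fin.last m)).a else 0 := by
      rw [sum_entry_snoc, rowWeight_snoc, hσ, zero_add, ← mul_ite_zero,
        VertexWeights.weight_of_right_eq_one_top_eq_one]
    simp only [hrow, entry_eq_zero_iff]
    rw [sum_eq_single 1 (by simp +contextual) (by simp), ih _ _ (by simp [hσ])]
    by_cases hr : ∑ j, entry (r j) = 1
    · simp [hr, Fin.prod_univ_succ]
      ring
    · simp [hr]

lemma rowWeight_zero_of_sum_eq_zero (W : Fin m → VertexWeights R) (r : Fin m → Fin 3)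
    (hr : ∑ j, entry (r j) = 0) :
    rowWeight W 0 0 r = if r = 1 then ∏ j, (W j).a else 0 := by
  split_ifs with h
  · subst h
    simp [rowWeight, sumBefore]
  · obtain ⟨j, hj⟩ : ∃ j, entry (r j) = -1 := by
      by_contra! hneg
      have hnonneg : ∀ j ∈ univ, 0 ≤ entry (r j) := fun j _ => by
        have := hneg j
        unfold entry at *
        lia
      exact h (funext fun j =>
        (entry_eq_zero_iff _).1 ((sum_eq_zero_iff_of_nonneg hnonneg).1 hr j (mem_univ j)))
    exact prod_eq_zero (mem_univ j) (by rw [hj]; exact VertexWeights.weight_zero_top_neg_one _ _)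

/-- The contribution to `partitionFunction W 0` of the configurations with entry `0` at the top
right corner, without the weight `b` of that corner. -/
def offCorner (W : Fin (k + 1) → Fin (m + 1) → VertexWeights R) : R :=
  ∑ r : Fin m → Fin 3 with ∑ j, entry (r j) = 1, rowWeight (fun j => W 0 j.castSucc) 0 0 r *
    partitionFunction (fun i => W i.succ)
      (Fin.snoc (fun j => entry (r j)) 0 : Fin (m + 1) → ℤ)

lemma offCorner_congr {W W' : Fin (k + 1) → Fin (m + 1) → VertexWeights R}
    (hrow : ∀ j : Fin m, W 0 j.castSucc = W' 0 j.castSucc)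
    (hrest : ∀ (i : Fin k) j, W i.succ j = W' i.succ j) : offCorner W = offCorner W' := by
  simp only [offCorner, hrow, funext fun i => funext (hrest i)]

lemma partitionFunction_eq_sum_onCorner_add (W : Fin (k + 1) → Fin (m + 1) → VertexWeights R) :
    partitionFunction W 0 =
      (W 0 (Fin.last m)).c * ∑ r : Fin m → Fin 3 with ∑ j, entry (r j) = 0,
        rowWeight (fun j => W 0 j.castSucc) 0 0 r * partitionFunction (fun i => W i.succ)
          (Fin.snoc (fun j => entry (r j)) 1 : Fin (m + 1) → ℤ) +
      (W 0 (Fin.last m)).b * offCorner W := by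
  rw [partitionFunction_succ, sum_fin_snoc, offCorner, sum_filter, sum_filter, mul_sum, mul_sum,
    ← sum_add_distrib]
  refine sum_congr rfl fun r _ => ?_
  have hbottom (x : Fin 3) : (fun j => entry ((Fin.snoc r x : Fin (m + 1) → Fin 3) j)) =
      (Fin.snoc (fun j => entry (r j)) (entry x) : Fin (m + 1) → ℤ) := by
    refine funext (Fin.lastCases ?_ fun j => ?_) <;> simp
  simp only [sum_entry_snoc, rowWeight_snoc, Pi.zero_apply, zero_add, ← mul_ite_zero,
    VertexWeights.weight_of_right_eq_one_top_eq_zero]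
  simp only [hbottom, Fin.sum_univ_three, entry_zero, entry_one, entry_two]
  by_cases h0 : ∑ j, entry (r j) = 0
  · simp [h0, Pi.zero_def]
    ring
  · by_cases h1 : ∑ j, entry (r j) = 1
    · simp [h1, Pi.zero_def]
      ring
    · simp [h0, h1]

lemma sum_onCorner (W : Fin (k + 1) → Fin (m + 1) → VertexWeights R) :
    ∑ r : Fin m → Fin 3 with ∑ j, entry (r j) = 0,
      rowWeight (fun j => W 0 j.castSucc) 0 0 r * partitionFunction (fun i => W i.succ)
        (Fin.snoc (fun j => entry (r j)) 1 : Fin (m + 1) → ℤ) =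
    (∏ j : Fin m, (W 0 j.castSucc).a) * ((∏ i : Fin k, (W i.succ (Fin.last m)).a) *
      partitionFunction (fun (i : Fin k) (j : Fin m) => W i.succ j.castSucc) 0) := by
  rw [sum_eq_single_of_mem (1 : Fin m → Fin 3) (by simp)]
  · rw [rowWeight_zero_of_sum_eq_zero _ _ (by simp), if_pos rfl,
      partitionFunction_of_last_top_eq_one _ _ (by simp)]
    simp [Pi.zero_def]
  · intro r hr hne
    rw [rowWeight_zero_of_sum_eq_zero _ r (by simpa using hr), if_neg hne, zero_mul]

lemma partitionFunction_eq_corner (W : Fin (k + 1) → Fin (m + 1) → VertexWeights R) :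
    partitionFunction W 0 =
      (W 0 (Fin.last m)).c * ((∏ j : Fin m, (W 0 j.castSucc).a) *
        ((∏ i : Fin k, (W i.succ (Fin.last m)).a) *
        partitionFunction (fun (i : Fin k) (j : Fin m) => W i.succ j.castSucc) 0)) +
      (W 0 (Fin.last m)).b * offCorner W := by
  rw [partitionFunction_eq_sum_onCorner_add, sum_onCorner]

end PartitionFunction

section YangBaxter

variable {R : Type*} [CommRing R] {k m : ℕ}

/-- The transfer matrix of two successive sites of one column, applied to a function `G` of the
outgoing vertical edge and of the two outgoing horizontal edges. -/
def transferTwoSites (w w' : VertexWeights R) (s : ℤ) (G : ℤ → ℤ → ℤ → R) (h h' : ℤ) : R :=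
  ∑ x : Fin 3, ∑ x' : Fin 3, w.weight h s (entry x) * w'.weight h' (s + entry x) (entry x') *
    G (s + entry x + entry x') (h + entry x) (h' + entry x')

/-- The transfer matrix of two successive rows, applied to a function `f` of the outgoing vertical
edges and of the two outgoing horizontal edges. -/
def transferTwoRows (w w' : Fin m → VertexWeights R) (σ : Fin m → ℤ)
    (f : (Fin m → ℤ) → ℤ → ℤ → R) (h h' : ℤ) : R :=
  ∑ r : Fin m → Fin 3, ∑ r' : Fin m → Fin 3,
    rowWeight w h σ r * rowWeight w' h' (fun j => σ j + entry (r j)) r' *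
      f (fun j => σ j + entry (r j) + entry (r' j)) (h + ∑ j, entry (r j)) (h' + ∑ j, entry (r' j))

lemma transferTwoRows_empty (w w' : Fin 0 → VertexWeights R) (σ : Fin 0 → ℤ)
    (f : (Fin 0 → ℤ) → ℤ → ℤ → R) : transferTwoRows w w' σ f = f σ := by
  funext h h'
  simp [transferTwoRows, rowWeight, Subsingleton.elim _ σ]

lemma transferTwoRows_succ (w w' : Fin (m + 1) → VertexWeights R) (σ : Fin (m + 1) → ℤ)
    (f : (Fin (m + 1) → ℤ) → ℤ → ℤ → R) :
    transferTwoRows w w' σ f = transferTwoSites (w 0) (w' 0) (σ 0) fun s =>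
      transferTwoRows (fun j => w j.succ) (fun j => w' j.succ) (fun j => σ j.succ)
        fun ρ => f (Fin.cons s ρ) := by
  funext h h'
  unfold transferTwoRows transferTwoSites
  simp only [sum_fin_cons (α := Fin 3)]
  refine sum_congr rfl fun x _ => ?_
  rw [sum_comm]
  refine sum_congr rfl fun x' _ => ?_
  simp only [mul_sum]
  refine sum_congr rfl fun r _ => sum_congr rfl fun r' _ => ?_
  have hbottom : (fun j => σ j + entry ((Fin.cons x r : Fin (m + 1) → Fin 3) j) +
      entry ((Fin.cons x' r' : Fin (m + 1) → Fin 3) j)) =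
      Fin.cons (σ 0 + entry x + entry x') fun j => σ j.succ + entry (r j) + entry (r' j) := by
    refine funext (Fin.cases ?_ fun j => ?_) <;> simp
  rw [hbottom]
  simp only [rowWeight_cons, Fin.sum_univ_succ, Fin.cons_zero, Fin.cons_succ, add_assoc]
  ring

/-- The weights of the integrable six-vertex model with crossing parameter `τ` at a site with row
parameter `u` and column parameter `v`. The weights `c` and `d` enter only through their product,
and are normalised so that `c = 1`. -/
def spectralWeights (τ u v : R) : VertexWeights R :=
  ⟨u - τ ^ 2 * v, τ * (u - v), 1, (1 - τ ^ 2) ^ 2 * u * v⟩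

/-- The matrix which intertwines the transfer matrices of two rows with parameters `u` and `w`,
applied to a function `G` of two horizontal edges. -/
def intertwiner (τ u w : R) (G : ℤ → ℤ → R) (h h' : ℤ) : R :=
  if h = 0 ∧ h' = 0 ∨ h = 1 ∧ h' = 1 then (w - τ ^ 2 * u) * G h h'
  else if h = 0 ∧ h' = 1 then (1 - τ ^ 2) * u * G 0 1 + τ * (w - u) * G 1 0
  else if h = 1 ∧ h' = 0 then (1 - τ ^ 2) * w * G 1 0 + τ * (w - u) * G 0 1
  else 0

lemma intertwiner_transferTwoSites (τ u w v : R) (s : ℤ) (G : ℤ → ℤ → ℤ → R) :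
    intertwiner τ u w (transferTwoSites (spectralWeights τ u v) (spectralWeights τ w v) s G) =
      transferTwoSites (spectralWeights τ w v) (spectralWeights τ u v) s
        fun s' => intertwiner τ u w (G s') := by
  funext h h'
  unfold transferTwoSites
  simp only [Fin.sum_univ_three, entry_zero, entry_one, entry_two]
  by_cases hs : s = 0 ∨ s = 1
  · by_cases hh : (h = 0 ∨ h = 1) ∧ (h' = 0 ∨ h' = 1)
    · obtain ⟨rfl | rfl, rfl | rfl⟩ := hh <;> rcases hs with rfl | rfl <;>
        simp [intertwiner, spectralWeights, VertexWeights.weight, IsIce] <;> ring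
    · rw [not_and_or, not_or, not_or] at hh
      rcases hh with ⟨h0, h1⟩ | ⟨h0, h1⟩ <;>
        simp [intertwiner, VertexWeights.weight, IsIce, h0, h1]
  · rw [not_or] at hs
    simp [intertwiner, VertexWeights.weight, IsIce, hs.1, hs.2]

lemma intertwiner_transferTwoRows (τ u w : R) (v : Fin m → R) (σ : Fin m → ℤ)
    (f : (Fin m → ℤ) → ℤ → ℤ → R) :
    intertwiner τ u w (transferTwoRows (fun j => spectralWeights τ u (v j))
        (fun j => spectralWeights τ w (v j)) σ f) =
      transferTwoRows (fun j => spectralWeights τ w (v j)) (fun j => spectralWeights τ u (v j)) σ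
        fun ρ => intertwiner τ u w (f ρ) := by
  induction m with
  | zero => rw [transferTwoRows_empty, transferTwoRows_empty]
  | succ m ih =>
    rw [transferTwoRows_succ, transferTwoRows_succ, intertwiner_transferTwoSites]
    simp only [ih]

end YangBaxter

section Spectral

variable {R S : Type*} [CommRing R] [CommRing S] {k m : ℕ}

/-- The partition function of the integrable six-vertex model with row parameters `u`, column
parameters `v` and top edges `σ`. -/
def spectralPartition (τ : R) (u : Fin k → R) (v : Fin m → R) (σ : Fin m → ℤ) : R :=
  partitionFunction (fun i j => spectralWeights τ (u i) (v j)) σ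

lemma map_spectralPartition (φ : R →+* S) (τ : R) (u : Fin k → R) (v : Fin m → R)
    (σ : Fin m → ℤ) :
    φ (spectralPartition τ u v σ) = spectralPartition (φ τ) (φ ∘ u) (φ ∘ v) σ := by
  simp [spectralPartition, map_partitionFunction, spectralWeights, VertexWeights.map]

lemma spectralPartition_succ (τ : R) (u : Fin (k + 1) → R) (v : Fin m → R) (σ : Fin m → ℤ) :
    spectralPartition τ u v σ = ∑ r : Fin m → Fin 3,
      (if ∑ j, entry (r j) = 1 then rowWeight (fun j => spectralWeights τ (u 0) (v j)) 0 σ r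
        else 0) * spectralPartition τ (u ∘ Fin.succ) v fun j => σ j + entry (r j) :=
  partitionFunction_succ _ σ

lemma spectralPartition_succ_succ (τ : R) (u : Fin (k + 2) → R) (v : Fin m → R)
    (σ : Fin m → ℤ) :
    spectralPartition τ u v σ =
      transferTwoRows (fun j => spectralWeights τ (u 0) (v j))
        (fun j => spectralWeights τ (u 1) (v j)) σ
        (fun ρ h h' => if h = 1 ∧ h' = 1 then
          spectralPartition τ (u ∘ Fin.succ ∘ Fin.succ) v ρ else 0) 0 0 := by
  rw [spectralPartition_succ]
  refine sum_congr rfl fun r _ => ?_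
  rw [spectralPartition_succ, mul_sum]
  refine sum_congr rfl fun r' _ => ?_
  simp only [zero_add, ite_and, Function.comp_apply, Fin.succ_zero_eq_one]
  split_ifs <;> simp [mul_assoc, Function.comp_assoc]

lemma mul_spectralPartition_swap_zero_one (τ : R) (u : Fin (k + 2) → R) (v : Fin m → R)
    (σ : Fin m → ℤ) :
    (u 1 - τ ^ 2 * u 0) * spectralPartition τ (u ∘ Equiv.swap 0 1) v σ =
      (u 1 - τ ^ 2 * u 0) * spectralPartition τ u v σ := by
  have hrest : (u ∘ Equiv.swap 0 1) ∘ Fin.succ ∘ Fin.succ = u ∘ Fin.succ ∘ Fin.succ := by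
    refine funext fun i => congrArg u (Equiv.swap_apply_of_ne_of_ne ?_ ?_)
    · exact Fin.succ_ne_zero _
    · exact fun h => Fin.succ_ne_zero i (Fin.succ_injective _ h)
  set f : (Fin m → ℤ) → ℤ → ℤ → R := fun ρ h h' =>
    if h = 1 ∧ h' = 1 then spectralPartition τ (u ∘ Fin.succ ∘ Fin.succ) v ρ else 0 with hf
  have hout : (fun ρ => intertwiner τ (u 0) (u 1) (f ρ)) =
      fun ρ h h' => (u 1 - τ ^ 2 * u 0) * f ρ h h' := by
    funext ρ h h'
    simp only [hf, intertwiner]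
    split_ifs <;> simp_all
  have hin (G : ℤ → ℤ → R) :
      intertwiner τ (u 0) (u 1) G 0 0 = (u 1 - τ ^ 2 * u 0) * G 0 0 := by simp [intertwiner]
  rw [spectralPartition_succ_succ, spectralPartition_succ_succ, hrest]
  simp only [Function.comp_apply, Equiv.swap_apply_left, Equiv.swap_apply_right, ← hf]
  rw [← hin (transferTwoRows (fun j => spectralWeights τ (u 0) (v j)) _ σ f),
    intertwiner_transferTwoRows, hout]
  simp only [transferTwoRows, mul_sum, mul_left_comm]

end Spectral

section Universal

variable {R : Type*} [CommRing R] {k m : ℕ}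

/-- The homomorphism from the polynomial ring in the crossing parameter `X none` and in the row and
column parameters which specialises these to `τ`, `u` and `v`. -/
noncomputable def specialize (τ : R) (u : Fin k → R) (v : Fin m → R) :
    MvPolynomial (Option (Fin k ⊕ Fin m)) ℤ →+* R :=
  MvPolynomial.eval₂Hom (Int.castRingHom R) fun o => o.elim τ (Sum.elim u v)

/-- The universal crossing parameter. -/
noncomputable def genericCrossing (k m : ℕ) : MvPolynomial (Option (Fin k ⊕ Fin m)) ℤ :=
  MvPolynomial.X none

/-- The universal row parameters. -/
noncomputable def genericRow (k m : ℕ) (i : Fin k) : MvPolynomial (Option (Fin k ⊕ Fin m)) ℤ :=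
  MvPolynomial.X (some (Sum.inl i))

/-- The universal column parameters. -/
noncomputable def genericCol (k m : ℕ) (j : Fin m) : MvPolynomial (Option (Fin k ⊕ Fin m)) ℤ :=
  MvPolynomial.X (some (Sum.inr j))

@[simp] lemma specialize_genericCrossing (τ : R) (u : Fin k → R) (v : Fin m → R) :
    specialize τ u v (genericCrossing k m) = τ := by
  simp [specialize, genericCrossing]

@[simp] lemma specialize_comp_genericRow (τ : R) (u : Fin k → R) (v : Fin m → R) :
    specialize τ u v ∘ genericRow k m = u := by
  funext i
  simp [specialize, genericRow]

@[simp] lemma specialize_comp_genericCol (τ : R) (u : Fin k → R) (v : Fin m → R) :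
    specialize τ u v ∘ genericCol k m = v := by
  funext j
  simp [specialize, genericCol]

@[simp] lemma specialize_genericRow (τ : R) (u : Fin k → R) (v : Fin m → R) (i : Fin k) :
    specialize τ u v (genericRow k m i) = u i :=
  congrFun (specialize_comp_genericRow τ u v) i

lemma spectralPartition_swap_zero_one (τ : R) (u : Fin (k + 2) → R) (v : Fin m → R)
    (σ : Fin m → ℤ) :
    spectralPartition τ (u ∘ Equiv.swap 0 1) v σ = spectralPartition τ u v σ := by
  have hne : genericRow (k + 2) m 1 - genericCrossing _ m ^ 2 * genericRow _ m 0 ≠ 0 := fun h => by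
    simpa using congrArg (specialize (0 : ℤ) (fun _ => 1) 0) h
  have := congrArg (specialize τ u v)
    (mul_left_cancel₀ hne (mul_spectralPartition_swap_zero_one _ _ (genericCol (k + 2) m) σ))
  simpa only [map_spectralPartition, ← Function.comp_assoc, specialize_genericCrossing,
    specialize_comp_genericRow, specialize_comp_genericCol] using this

lemma spectralPartition_swap_castSucc_succ (τ : R) (u : Fin (k + 1) → R) (v : Fin m → R)
    (i : Fin k) (σ : Fin m → ℤ) :
    spectralPartition τ (u ∘ Equiv.swap i.castSucc i.succ) v σ = spectralPartition τ u v σ := by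
  induction k generalizing σ with
  | zero => exact i.elim0
  | succ k ih =>
    induction i using Fin.cases with
    | zero => exact spectralPartition_swap_zero_one τ u v σ
    | succ i =>
      have hzero : (u ∘ Equiv.swap i.succ.castSucc i.succ.succ) 0 = u 0 := congrArg u <|
        Equiv.swap_apply_of_ne_of_ne (Fin.succ_ne_zero i.castSucc).symm (Fin.succ_ne_zero _).symm
      have hrest : (u ∘ Equiv.swap i.succ.castSucc i.succ.succ) ∘ Fin.succ =
          (u ∘ Fin.succ) ∘ Equiv.swap i.castSucc i.succ := by
        funext l
        simp [(Fin.succ_injective _).swap_apply]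
      rw [spectralPartition_succ, hrest, hzero, spectralPartition_succ τ u]
      simp only [ih]

theorem spectralPartition_comp_perm (τ : R) (u : Fin k → R) (v : Fin m → R)
    (p : Equiv.Perm (Fin k)) (σ : Fin m → ℤ) :
    spectralPartition τ (u ∘ p) v σ = spectralPartition τ u v σ := by
  cases k with
  | zero => exact congrArg (fun u => spectralPartition τ u v σ) (Subsingleton.elim _ _)
  | succ k =>
    have hp : p ∈ Submonoid.closure
        (Set.range fun i : Fin k => Equiv.swap i.castSucc i.succ) := by
      rw [Equiv.Perm.mclosure_swap_castSucc_succ]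
      exact Submonoid.mem_top p
    induction hp using Submonoid.closure_induction generalizing u with
    | mem p hp =>
      obtain ⟨i, rfl⟩ := hp
      exact spectralPartition_swap_castSucc_succ τ u v i σ
    | one => rfl
    | mul p q _ _ hp hq => rw [Equiv.Perm.coe_mul, ← Function.comp_assoc, hq, hp]

end Universal

section Vandermonde

open Matrix

variable {R : Type*} [CommRing R] {n : ℕ}

lemma det_vandermonde_succ (v : Fin (n + 1) → R) :
    (vandermonde v).det = (∏ j : Fin n, (v j.succ - v 0)) * (vandermonde (v ∘ Fin.succ)).det := by
  simp only [det_vandermonde, Fin.prod_univ_succ, Fin.prod_Ioi_zero, Fin.prod_Ioi_succ,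
    Function.comp_apply]

lemma det_vandermonde_castSucc (v : Fin (n + 1) → R) :
    (vandermonde v).det = (vandermonde (v ∘ Fin.castSucc)).det *
      ∏ j : Fin n, (v (Fin.last n) - v j.castSucc) := by
  have hcomm (n : ℕ) (v : Fin n → R) :
      (vandermonde v).det = ∏ j, ∏ i ∈ Iio j, (v j - v i) := by
    rw [det_vandermonde]
    exact prod_comm' (by simp)
  simp only [hcomm, Fin.prod_univ_castSucc, Fin.prod_Iio_castSucc, Fin.Iio_last_eq_map,
    prod_map, Fin.coe_castSuccEmb, Function.comp_apply]

lemma det_vandermonde_comp_perm (v : Fin n → R) (p : Equiv.Perm (Fin n)) :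
    (vandermonde (v ∘ p)).det = ((Equiv.Perm.sign p : ℤ) : R) * (vandermonde v).det :=
  det_permute p (vandermonde v)

lemma det_vandermonde_eq_zero {v : Fin n → R} {i j : Fin n} (hij : i ≠ j) (h : v i = v j) :
    (vandermonde v).det = 0 :=
  det_zero_of_row_eq hij (by funext k; simp only [vandermonde_apply, h])

lemma map_vandermonde {S : Type*} [CommRing S] (φ : R →+* S) (v : Fin n → R) :
    φ.mapMatrix (vandermonde v) = vandermonde (φ ∘ v) := by
  ext i j
  simp

end Vandermonde

section IzerginKorepin

open Matrix

variable {R : Type*} [CommRing R] {n : ℕ}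

/-- The Izergin–Korepin matrix of entries `1 / ((uᵢ - τ² vⱼ) (uᵢ - vⱼ))`, with the denominators
cleared column by column. -/
def ikMatrix (τ : R) (u v : Fin n → R) : Matrix (Fin n) (Fin n) R :=
  of fun i j => ∏ k with k ≠ i, (u k - τ ^ 2 * v j) * (u k - v j)

/-- The difference of the two sides of the Izergin–Korepin formula. -/
def ikDefect (τ : R) (u v : Fin n → R) : R :=
  spectralPartition τ u v 0 * (vandermonde u).det * (vandermonde (-v)).det - (ikMatrix τ u v).det

lemma map_ikMatrix {S : Type*} [CommRing S] (φ : R →+* S) (τ : R) (u v : Fin n → R) :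
    φ.mapMatrix (ikMatrix τ u v) = ikMatrix (φ τ) (φ ∘ u) (φ ∘ v) := by
  ext i j
  simp [ikMatrix]

lemma map_ikDefect {S : Type*} [CommRing S] (φ : R →+* S) (τ : R) (u v : Fin n → R) :
    φ (ikDefect τ u v) = ikDefect (φ τ) (φ ∘ u) (φ ∘ v) := by
  have hneg : φ ∘ (-v) = -(φ ∘ v) := by
    funext j
    simp
  simp only [ikDefect, map_sub, map_mul, map_spectralPartition, RingHom.map_det,
    map_vandermonde, hneg, map_ikMatrix]

lemma det_ikMatrix_comp_perm (τ : R) (u v : Fin n → R) (p : Equiv.Perm (Fin n)) :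
    (ikMatrix τ (u ∘ p) v).det = ((Equiv.Perm.sign p : ℤ) : R) * (ikMatrix τ u v).det := by
  rw [← det_permute]
  congr 1
  ext i j
  simp only [ikMatrix, of_apply, submatrix_apply, id, prod_filter, Function.comp_apply]
  rw [← Equiv.prod_comp p fun k => if k ≠ p i then _ else _]
  simp only [ne_eq, p.injective.eq_iff]

lemma ikDefect_comp_perm (τ : R) (u v : Fin n → R) (p : Equiv.Perm (Fin n)) :
    ikDefect τ (u ∘ p) v = ((Equiv.Perm.sign p : ℤ) : R) * ikDefect τ u v := by
  rw [ikDefect, spectralPartition_comp_perm, det_vandermonde_comp_perm, det_ikMatrix_comp_perm,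
    ikDefect]
  ring

lemma spectralPartition_snoc_head (τ : R) (u : Fin (n + 1) → R) (v : Fin n → R) :
    spectralPartition τ u (Fin.snoc v (u 0) : Fin (n + 1) → R) 0 =
      (∏ j, (u 0 - τ ^ 2 * v j)) * (∏ i : Fin n, (u i.succ - τ ^ 2 * u 0)) *
        spectralPartition τ (u ∘ Fin.succ) v 0 := by
  rw [spectralPartition, partitionFunction_eq_corner]
  simp [spectralWeights, spectralPartition, mul_assoc]

lemma det_ikMatrix_snoc_head (τ : R) (u : Fin (n + 1) → R) (v : Fin n → R) :
    (ikMatrix τ u (Fin.snoc v (u 0) : Fin (n + 1) → R)).det =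
      (-1) ^ n * (∏ k : Fin n, (u k.succ - τ ^ 2 * u 0) * (u k.succ - u 0)) *
        ((∏ j, (u 0 - τ ^ 2 * v j) * (u 0 - v j)) * (ikMatrix τ (u ∘ Fin.succ) v).det) := by
  have hzero (i : Fin n) : ikMatrix τ u (Fin.snoc v (u 0) : Fin (n + 1) → R) i.succ
      (Fin.last n) = 0 := by
    simp [ikMatrix, prod_filter, Fin.prod_univ_succ, (Fin.succ_ne_zero i).symm]
  rw [det_succ_column _ (Fin.last n), Fin.sum_univ_succ, ← det_mul_row]
  simp only [hzero, mul_zero, zero_mul, sum_const_zero, add_zero]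
  congr 2
  · simp
  · simp [ikMatrix, prod_filter, Fin.prod_univ_succ]
  · ext i j
    simp [ikMatrix, prod_filter, Fin.prod_univ_succ, (Fin.succ_ne_zero i).symm]

lemma ikDefect_snoc_head (τ : R) (u : Fin (n + 1) → R) (v : Fin n → R) :
    ikDefect τ u (Fin.snoc v (u 0) : Fin (n + 1) → R) =
      (∏ j, (u 0 - τ ^ 2 * v j)) * (∏ i : Fin n, (u i.succ - τ ^ 2 * u 0)) *
        (∏ i : Fin n, (u i.succ - u 0)) * (∏ j, (v j - u 0)) * ikDefect τ (u ∘ Fin.succ) v := by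
  have hneg : (-(Fin.snoc v (u 0) : Fin (n + 1) → R)) ∘ Fin.castSucc = -v := by
    funext j
    simp
  have hsign : ∏ j : Fin n, (u 0 - v j) = (-1) ^ n * ∏ j : Fin n, (v j - u 0) := by
    rw [← Fin.prod_const, ← prod_mul_distrib]
    exact prod_congr rfl fun j _ => by ring
  have hsq : ((-1 : R) ^ n) * (-1) ^ n = 1 := by rw [← mul_pow]; simp
  rw [ikDefect, spectralPartition_snoc_head, det_ikMatrix_snoc_head, det_vandermonde_succ u,
    det_vandermonde_castSucc, hneg, ikDefect, prod_mul_distrib, prod_mul_distrib, hsign]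
  simp only [Pi.neg_apply, Fin.snoc_castSucc, Fin.snoc_last, neg_sub_neg]
  linear_combination (-(∏ j, (u 0 - τ ^ 2 * v j)) * (∏ i : Fin n, (u i.succ - τ ^ 2 * u 0)) *
    (∏ i : Fin n, (u i.succ - u 0)) * (∏ j, (v j - u 0)) * (ikMatrix τ (u ∘ Fin.succ) v).det) *
    hsq

lemma ikDefect_snoc_eq_zero (τ : R) (u : Fin (n + 1) → R) (v : Fin n → R) (i : Fin (n + 1))
    (h : ikDefect τ (u ∘ i.succAbove) v = 0) :
    ikDefect τ u (Fin.snoc v (u i) : Fin (n + 1) → R) = 0 := by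
  have hhead : (u ∘ i.cycleRange.symm) 0 = u i := by simp
  have htail : (u ∘ i.cycleRange.symm) ∘ Fin.succ = u ∘ i.succAbove := by
    funext l
    simp
  have hzero := ikDefect_snoc_head τ (u ∘ i.cycleRange.symm) v
  rw [htail, h, mul_zero, hhead, ikDefect_comp_perm] at hzero
  rcases Int.units_eq_one_or (Equiv.Perm.sign i.cycleRange.symm) with hs | hs <;>
    simpa [hs] using hzero

lemma ikDefect_eq_zero_of_col_eq (τ : R) (u v : Fin n → R) {i j : Fin n} (hij : i ≠ j)
    (h : v i = v j) : ikDefect τ u v = 0 := by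
  have hcol : ∀ k, ikMatrix τ u v k i = ikMatrix τ u v k j := by simp [ikMatrix, h]
  rw [ikDefect, det_vandermonde_eq_zero (v := -v) hij (congrArg Neg.neg h),
    det_zero_of_column_eq hij hcol,
    mul_zero, sub_zero]

end IzerginKorepin

section Degree

open Polynomial Matrix

variable {R : Type*} [CommRing R] {n : ℕ}

lemma natDegree_spectralWeights_C (τ p q : R) (h s e : ℤ) :
    ((spectralWeights (C τ) (C p) (C q)).weight h s e).natDegree = 0 := by
  have hC : spectralWeights (C τ) (C p) (C q) = (spectralWeights τ p q).map C := by
    simp [spectralWeights, VertexWeights.map]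
  rw [hC, ← VertexWeights.map_weight, natDegree_C]

lemma natDegree_spectralWeights_X_le (τ p : R) (h s e : ℤ) :
    ((spectralWeights (C τ) (C p) X).weight h s e).natDegree ≤ if e = 1 then 0 else 1 := by
  have ha : (C p - C τ ^ 2 * X).natDegree ≤ 1 := by compute_degree
  have hb : (C τ * (C p - X)).natDegree ≤ 1 := by compute_degree
  have hd : ((1 - C τ ^ 2) ^ 2 * C p * X).natDegree ≤ 1 := by
    have hC : (1 - C τ ^ 2) ^ 2 * C p * X = C ((1 - τ ^ 2) ^ 2 * p) * X := by simp
    exact hC ▸ natDegree_mul_le_of_le (natDegree_C _).le natDegree_X_le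
  unfold spectralWeights VertexWeights.weight
  split_ifs <;> simp_all

lemma natDegree_rowWeight_snoc_X_le (τ p : R) (v : Fin n → R) (h : ℤ) (σ : Fin (n + 1) → ℤ)
    (r : Fin (n + 1) → Fin 3) :
    (rowWeight (fun j => spectralWeights (C τ) (C p)
      ((Fin.snoc (C ∘ v) X : Fin (n + 1) → R[X]) j)) h σ r).natDegree ≤
      if entry (r (Fin.last n)) = 1 then 0 else 1 := by
  refine (natDegree_prod_le _ _).trans ?_
  simp only [Fin.sum_univ_castSucc, Fin.snoc_castSucc, Fin.snoc_last, Function.comp_apply,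
    natDegree_spectralWeights_C, sum_const_zero, zero_add]
  exact natDegree_spectralWeights_X_le _ _ _ _ _

lemma natDegree_spectralPartition_snoc_X_le (τ : R) (u : Fin (n + 1) → R) (v : Fin n → R) :
    (spectralPartition (C τ) (C ∘ u) (Fin.snoc (C ∘ v) X : Fin (n + 1) → R[X]) 0).natDegree ≤
      n := by
  refine natDegree_sum_le_of_forall_le _ _ fun e _ => ?_
  split_ifs with he
  · obtain ⟨i₀, -, hi₀⟩ : ∃ i ∈ univ, 0 < entry (e i (Fin.last n)) :=
      exists_lt_of_sum_lt (by
        have := he.2 (Fin.last n)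
        simp_all)
    have hone : entry (e i₀ (Fin.last n)) = 1 := entry_eq_one_of_pos hi₀
    calc _ ≤ ∑ i, if entry (e i (Fin.last n)) = 1 then 0 else 1 :=
          (natDegree_prod_le _ _).trans
            (sum_le_sum fun i _ => natDegree_rowWeight_snoc_X_le τ (u i) v _ _ _)
      _ ≤ ∑ i, if i = i₀ then 0 else 1 := sum_le_sum fun i _ => by
          split_ifs <;> simp_all
      _ = n := by simp [sum_ite, filter_ne']
  · simp

lemma natDegree_det_vandermonde_snoc_X_le (v : Fin n → R) :
    (vandermonde (-(Fin.snoc (C ∘ v) X : Fin (n + 1) → R[X]))).det.natDegree ≤ n := by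
  have hinit : (-(Fin.snoc (C ∘ v) X : Fin (n + 1) → R[X])) ∘ Fin.castSucc = C ∘ (-v) := by
    funext j
    simp
  rw [det_vandermonde_castSucc, hinit, ← map_vandermonde, ← RingHom.map_det]
  refine (natDegree_C_mul_le _ _).trans ((natDegree_prod_le _ _).trans ?_)
  refine (sum_le_card_nsmul _ _ 1 fun j _ => ?_).trans (by simp)
  simp only [Pi.neg_apply, Fin.snoc_castSucc, Fin.snoc_last, Function.comp_apply]
  compute_degree

lemma natDegree_det_ikMatrix_snoc_X_le (τ : R) (u : Fin (n + 1) → R) (v : Fin n → R) :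
    (ikMatrix (C τ) (C ∘ u) (Fin.snoc (C ∘ v) X : Fin (n + 1) → R[X])).det.natDegree ≤
      2 * n := by
  rw [det_succ_column _ (Fin.last n)]
  refine natDegree_sum_le_of_forall_le _ _ fun i _ => ?_
  have hminor : (ikMatrix (C τ) (C ∘ u) (Fin.snoc (C ∘ v) X : Fin (n + 1) → R[X])).submatrix
      i.succAbove (Fin.last n).succAbove = C.mapMatrix ((ikMatrix τ u
        (Fin.snoc v 0 : Fin (n + 1) → R)).submatrix i.succAbove (Fin.last n).succAbove) := by
    ext k j : 2
    simp [ikMatrix]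
  have hsign : (-1 : R[X]) ^ ((i : ℕ) + (Fin.last n : ℕ)) =
      C ((-1) ^ ((i : ℕ) + (Fin.last n : ℕ))) := by simp
  rw [hminor, ← RingHom.map_det, hsign]
  refine (natDegree_mul_C_le _ _).trans ((natDegree_C_mul_le _ _).trans ?_)
  simp only [ikMatrix, of_apply, Fin.snoc_last]
  refine (natDegree_prod_le _ _).trans ((sum_le_card_nsmul _ _ 2 fun k _ => ?_).trans ?_)
  · simp only [Function.comp_apply]
    compute_degree
  · simp [filter_ne', mul_comm]

lemma natDegree_ikDefect_snoc_X_le (τ : R) (u : Fin (n + 1) → R) (v : Fin n → R) :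
    (ikDefect (C τ) (C ∘ u) (Fin.snoc (C ∘ v) X : Fin (n + 1) → R[X])).natDegree ≤ 2 * n := by
  refine natDegree_sub_le_of_le (p := _ * _) ?_ (natDegree_det_ikMatrix_snoc_X_le τ u v) |>.trans
    (max_self _).le
  rw [← map_vandermonde, ← RingHom.map_det, two_mul]
  refine natDegree_mul_le_of_le ?_ (natDegree_det_vandermonde_snoc_X_le v)
  exact (natDegree_mul_C_le _ _).trans (natDegree_spectralPartition_snoc_X_le τ u v)

lemma ikDefect_eq_zero_of_injective [IsDomain R] (τ : R) (u v : Fin n → R)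
    (hu : Function.Injective u) (hv : Function.Injective v) (huv : ∀ i j, u i ≠ v j) :
    ikDefect τ u v = 0 := by
  induction n with
  | zero => simp [ikDefect, spectralPartition, partitionFunction]
  | succ n ih =>
    obtain ⟨v, x, rfl⟩ : ∃ (v' : Fin n → R) (x : R), v = (Fin.snoc v' x : Fin (n + 1) → R) :=
      ⟨_, _, (Fin.snoc_init_self v).symm⟩
    have hv' : Function.Injective v := fun i j h => by
      simpa using @hv i.castSucc j.castSucc (by simpa using h)
    have huv' (i : Fin (n + 1)) (j : Fin n) : u i ≠ v j := by simpa using huv i j.castSucc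
    set P : R[X] := ikDefect (C τ) (C ∘ u) (Fin.snoc (C ∘ v) X : Fin (n + 1) → R[X]) with hP
    have heval (y : R) : P.eval y = ikDefect τ u (Fin.snoc v y : Fin (n + 1) → R) := by
      have hy : evalRingHom y ∘ (Fin.snoc (C ∘ v) X : Fin (n + 1) → R[X]) = Fin.snoc v y :=
        funext (Fin.lastCases (by simp) (by simp))
      rw [← coe_evalRingHom, hP, map_ikDefect, hy, ← Function.comp_assoc]
      congr
      · simp
      · funext i
        simp
    rw [← heval, eq_zero_of_natDegree_lt_card_of_eval_eq_zero P
      (f := (Sum.elim u v : Fin (n + 1) ⊕ Fin n → R)) (hu.sumElim hv' huv') ?_ ?_, eval_zero]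
    · rintro (i | j)
      · rw [heval]
        exact ikDefect_snoc_eq_zero τ u v i
          (ih _ _ (hu.comp Fin.succAbove_right_injective) hv' fun _ _ => huv' _ _)
      · rw [heval]
        exact ikDefect_eq_zero_of_col_eq τ u _ (Fin.castSucc_lt_last j).ne (by simp)
    · have := natDegree_ikDefect_snoc_X_le τ u v
      simp only [Fintype.card_sum, Fintype.card_fin]
      lia

lemma genericRow_injective (k m : ℕ) : Function.Injective (genericRow k m) :=
  (MvPolynomial.X_injective).comp ((Option.some_injective _).comp Sum.inl_injective)

lemma genericCol_injective (k m : ℕ) : Function.Injective (genericCol k m) :=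
  (MvPolynomial.X_injective).comp ((Option.some_injective _).comp Sum.inr_injective)

lemma genericRow_ne_genericCol (k m : ℕ) (i : Fin k) (j : Fin m) :
    genericRow k m i ≠ genericCol k m j :=
  fun h => Sum.inl_ne_inr (Option.some_injective _ (MvPolynomial.X_injective h))

theorem det_vandermonde_mul_spectralPartition (τ : R) (u v : Fin n → R) :
    spectralPartition τ u v 0 * (vandermonde u).det * (vandermonde (-v)).det =
      (ikMatrix τ u v).det := by
  have h := congrArg (specialize τ u v)
    (ikDefect_eq_zero_of_injective (genericCrossing n n) _ _ (genericRow_injective n n)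
      (genericCol_injective n n) (genericRow_ne_genericCol n n))
  rw [map_ikDefect, specialize_genericCrossing, specialize_comp_genericRow,
    specialize_comp_genericCol, map_zero] at h
  exact sub_eq_zero.1 h

end Degree

section DesnanotJacobi

open Matrix

variable {R : Type*} [CommRing R]

/-- The interior indices `1, …, n` of `Fin (n + 2)`. -/
def interior {n : ℕ} (i : Fin n) : Fin (n + 2) :=
  i.castSucc.succ

lemma det_mul_det_toBlocks₁₁_adjugate {m n : Type*} [Fintype m] [Fintype n] [DecidableEq m]
    [DecidableEq n] (M : Matrix (m ⊕ n) (m ⊕ n) R) :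
    M.det * M.adjugate.toBlocks₁₁.det = M.det ^ Fintype.card m * M.toBlocks₂₂.det := by
  have hblocks : M * fromBlocks M.adjugate.toBlocks₁₁ 0 M.adjugate.toBlocks₂₁ 1 =
      fromBlocks (M.det • 1) M.toBlocks₁₂ 0 M.toBlocks₂₂ := by
    have hadj := M.mul_adjugate
    rw [← fromBlocks_toBlocks M, ← fromBlocks_toBlocks (adjugate _), fromBlocks_multiply,
      ← fromBlocks_one, fromBlocks_smul, fromBlocks_inj, fromBlocks_toBlocks] at hadj
    conv_lhs => rw [← fromBlocks_toBlocks M]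
    rw [fromBlocks_multiply, fromBlocks_toBlocks, hadj.1, hadj.2.2.1]
    simp
  simpa [det_mul, det_fromBlocks_zero₁₂, det_fromBlocks_zero₂₁, det_smul]
    using congrArg det hblocks

lemma bijective_sumElim_ends_interior (n : ℕ) :
    Function.Bijective (Sum.elim ![0, Fin.last (n + 1)] (interior (n := n))) := by
  rw [Fintype.bijective_iff_injective_and_card]
  refine ⟨Function.Injective.sumElim ?_ ?_ ?_, by simpa using add_comm 2 n⟩
  · intro a b
    fin_cases a <;> fin_cases b <;> simp [Fin.ext_iff]
  · intro a b
    simp [interior]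
  · intro a b
    have := b.isLt
    fin_cases a <;> simp [interior, Fin.ext_iff]
    lia

lemma det_mul_det_submatrix_interior_of_det_ne_zero [IsDomain R] {n : ℕ}
    (M : Matrix (Fin (n + 2)) (Fin (n + 2)) R) (hM : M.det ≠ 0) :
    M.det * (M.submatrix interior interior).det =
      (M.submatrix Fin.succ Fin.succ).det * (M.submatrix Fin.castSucc Fin.castSucc).det -
        (M.submatrix Fin.succ Fin.castSucc).det * (M.submatrix Fin.castSucc Fin.succ).det := by
  let e := Equiv.ofBijective _ (bijective_sumElim_ends_interior n)
  have hblock := det_mul_det_toBlocks₁₁_adjugate (M.submatrix e e)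
  rw [det_submatrix_equiv_self, adjugate_submatrix_equiv_self, Fintype.card_fin, pow_two,
    mul_assoc] at hblock
  have hends : (M.submatrix e e).toBlocks₂₂ = M.submatrix interior interior := rfl
  have hsign : ((-1 : R) ^ (n + 1)) * (-1) ^ (n + 1) = 1 := by rw [← mul_pow]; simp
  have hzero : e (Sum.inl 0) = 0 := rfl
  have hlast : e (Sum.inl 1) = Fin.last (n + 1) := rfl
  rw [← hends, ← mul_left_cancel₀ hM hblock, det_fin_two]
  simp only [toBlocks₁₁, of_apply, submatrix_apply, hzero, hlast,
    adjugate_fin_succ_eq_det_submatrix, Fin.succAbove_zero, Fin.succAbove_last, Fin.val_zero,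
    Fin.val_last, add_zero, zero_add, pow_zero, one_mul, pow_add (-1 : R) (n + 1), hsign]
  linear_combination -(M.submatrix Fin.castSucc Fin.succ).det *
    (M.submatrix Fin.succ Fin.castSucc).det * hsign

/-- The Desnanot–Jacobi identity. -/
theorem det_mul_det_submatrix_interior {n : ℕ} (M : Matrix (Fin (n + 2)) (Fin (n + 2)) R) :
    M.det * (M.submatrix interior interior).det =
      (M.submatrix Fin.succ Fin.succ).det * (M.submatrix Fin.castSucc Fin.castSucc).det -
        (M.submatrix Fin.succ Fin.castSucc).det * (M.submatrix Fin.castSucc Fin.succ).det := by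
  let φ := MvPolynomial.eval₂Hom (Int.castRingHom R) (Function.uncurry M)
  have hφ : (mvPolynomialX (Fin (n + 2)) (Fin (n + 2)) ℤ).map φ = M := by
    ext i j
    simp [φ, Function.uncurry]
  have hgeneric := congrArg φ (det_mul_det_submatrix_interior_of_det_ne_zero _
    (det_mvPolynomialX_ne_zero (Fin (n + 2)) ℤ))
  simpa only [map_sub, map_mul, RingHom.map_det, RingHom.mapMatrix_apply, ← submatrix_map, hφ]
    using hgeneric

lemma det_vandermonde_mul_det_vandermonde_interior {n : ℕ} (v : Fin (n + 2) → R) :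
    (vandermonde v).det * (vandermonde (v ∘ interior)).det =
      (v (Fin.last (n + 1)) - v 0) *
        ((vandermonde (v ∘ Fin.succ)).det * (vandermonde (v ∘ Fin.castSucc)).det) := by
  rw [det_vandermonde_succ v, det_vandermonde_succ (v ∘ Fin.castSucc), Fin.prod_univ_castSucc]
  simp only [Function.comp_def, Fin.castSucc_zero, Fin.succ_last, Fin.succ_castSucc, interior]
  ring

end DesnanotJacobi

section Bilinear

open Matrix

variable {R : Type*} [CommRing R] {n : ℕ}

lemma det_ikMatrix_submatrix_succ (τ : R) (u v : Fin (n + 1) → R) (p : Fin n → Fin (n + 1)) :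
    ((ikMatrix τ u v).submatrix Fin.succ p).det =
      (∏ j, (u 0 - τ ^ 2 * v (p j)) * (u 0 - v (p j))) *
        (ikMatrix τ (u ∘ Fin.succ) (v ∘ p)).det := by
  rw [← det_mul_row]
  congr 1
  ext i j
  simp [ikMatrix, prod_filter, Fin.prod_univ_succ, (Fin.succ_ne_zero i).symm]

lemma det_ikMatrix_submatrix_castSucc (τ : R) (u v : Fin (n + 1) → R)
    (p : Fin n → Fin (n + 1)) :
    ((ikMatrix τ u v).submatrix Fin.castSucc p).det =
      (∏ j, (u (Fin.last n) - τ ^ 2 * v (p j)) * (u (Fin.last n) - v (p j))) *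
        (ikMatrix τ (u ∘ Fin.castSucc) (v ∘ p)).det := by
  rw [← det_mul_row]
  congr 1
  ext i j
  simp [ikMatrix, prod_filter, Fin.prod_univ_castSucc, (Fin.castSucc_lt_last i).ne', mul_comm]

lemma det_ikMatrix_submatrix_interior (τ : R) (u v : Fin (n + 2) → R) :
    ((ikMatrix τ u v).submatrix interior interior).det =
      (∏ j, (u 0 - τ ^ 2 * v (interior j)) * (u 0 - v (interior j))) *
      ((∏ j, (u (Fin.last (n + 1)) - τ ^ 2 * v (interior j)) *
        (u (Fin.last (n + 1)) - v (interior j))) *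
        (ikMatrix τ (u ∘ interior) (v ∘ interior)).det) := by
  rw [← det_mul_row, ← det_mul_row]
  congr 1
  ext i j
  simp [ikMatrix, prod_filter, interior, Fin.prod_univ_succ (n := n + 1),
    Fin.prod_univ_castSucc (n := n), (Fin.succ_ne_zero _).symm, (Fin.castSucc_lt_last i).ne',
    ← Fin.succ_last, mul_comm]

/-- The factor common to the terms of the Desnanot–Jacobi identity for `ikMatrix τ u v`. -/
def bilinearFactor (τ : R) (u v : Fin (n + 2) → R) : R :=
  (∏ j, (u 0 - τ ^ 2 * v (interior j)) * (u 0 - v (interior j))) *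
    (∏ j, (u (Fin.last (n + 1)) - τ ^ 2 * v (interior j)) *
      (u (Fin.last (n + 1)) - v (interior j))) *
    ((vandermonde (u ∘ Fin.succ)).det * (vandermonde (u ∘ Fin.castSucc)).det) *
    ((vandermonde ((-v) ∘ Fin.succ)).det * (vandermonde ((-v) ∘ Fin.castSucc)).det)

/-- The failure of the bilinear identity satisfied by the spectral partition functions. -/
def bilinearDefect (τ : R) (u v : Fin (n + 2) → R) : R :=
  (u 0 - τ ^ 2 * v (Fin.last (n + 1))) * (u 0 - v (Fin.last (n + 1))) *
        ((u (Fin.last (n + 1)) - τ ^ 2 * v 0) * (u (Fin.last (n + 1)) - v 0)) *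
      (spectralPartition τ (u ∘ Fin.succ) (v ∘ Fin.succ) 0 *
        spectralPartition τ (u ∘ Fin.castSucc) (v ∘ Fin.castSucc) 0) -
    (u 0 - τ ^ 2 * v 0) * (u 0 - v 0) * ((u (Fin.last (n + 1)) - τ ^ 2 * v (Fin.last (n + 1))) *
        (u (Fin.last (n + 1)) - v (Fin.last (n + 1)))) *
      (spectralPartition τ (u ∘ Fin.succ) (v ∘ Fin.castSucc) 0 *
        spectralPartition τ (u ∘ Fin.castSucc) (v ∘ Fin.succ) 0) -
    (u (Fin.last (n + 1)) - u 0) * (v 0 - v (Fin.last (n + 1))) *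
      (spectralPartition τ u v 0 * spectralPartition τ (u ∘ interior) (v ∘ interior) 0)

lemma bilinearFactor_mul_bilinearDefect (τ : R) (u v : Fin (n + 2) → R) :
    bilinearFactor τ u v * bilinearDefect τ u v = 0 := by
  have hdet := det_mul_det_submatrix_interior (ikMatrix τ u v)
  rw [det_ikMatrix_submatrix_interior, det_ikMatrix_submatrix_succ, det_ikMatrix_submatrix_succ,
    det_ikMatrix_submatrix_castSucc, det_ikMatrix_submatrix_castSucc] at hdet
  simp only [← det_vandermonde_mul_spectralPartition] at hdet
  simp only [Fin.prod_univ_castSucc (n := n) (f := fun j => _ * (_ - v j.succ)),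
    Fin.prod_univ_succ (n := n) (f := fun j => _ * (_ - v j.castSucc)), Fin.castSucc_zero,
    Fin.succ_last, ← Fin.succ_castSucc, Nat.succ_eq_add_one] at hdet
  have hu := det_vandermonde_mul_det_vandermonde_interior u
  have hv := det_vandermonde_mul_det_vandermonde_interior (-v)
  simp only [Pi.neg_apply, neg_sub_neg] at hv
  have hneg {m : ℕ} (p : Fin m → Fin (n + 2)) : -(v ∘ p) = (-v) ∘ p := rfl
  simp only [hneg, ← interior.eq_1] at hdet
  unfold bilinearFactor bilinearDefect
  linear_combination -hdet +
    (∏ j, (u 0 - τ ^ 2 * v (interior j)) * (u 0 - v (interior j))) *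
      (∏ j, (u (Fin.last (n + 1)) - τ ^ 2 * v (interior j)) *
        (u (Fin.last (n + 1)) - v (interior j))) *
      spectralPartition τ u v 0 * spectralPartition τ (u ∘ interior) (v ∘ interior) 0 *
      ((vandermonde (-v)).det * (vandermonde ((-v) ∘ interior)).det * hu +
        (u (Fin.last (n + 1)) - u 0) * ((vandermonde (u ∘ Fin.succ)).det *
          (vandermonde (u ∘ Fin.castSucc)).det) * hv)

lemma bilinearFactor_generic_ne_zero (n : ℕ) :
    bilinearFactor (genericCrossing (n + 2) (n + 2)) (genericRow _ _) (genericCol _ _) ≠ 0 := by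
  have hweight (i j : Fin (n + 2)) :
      genericRow (n + 2) (n + 2) i - genericCrossing _ _ ^ 2 * genericCol _ _ j ≠ 0 := fun h => by
    simpa using congrArg (specialize (0 : ℤ) (fun _ => 1) 0) h
  have hrow := genericRow_injective (n + 2) (n + 2)
  have hcol : Function.Injective (-genericCol (n + 2) (n + 2)) :=
    neg_injective.comp (genericCol_injective _ _)
  have hsub (i j : Fin (n + 2)) := sub_ne_zero.2 (genericRow_ne_genericCol _ _ i j)
  refine mul_ne_zero (mul_ne_zero (mul_ne_zero ?_ ?_) (mul_ne_zero ?_ ?_)) (mul_ne_zero ?_ ?_)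
  · exact prod_ne_zero_iff.2 fun j _ => mul_ne_zero (hweight _ _) (hsub _ _)
  · exact prod_ne_zero_iff.2 fun j _ => mul_ne_zero (hweight _ _) (hsub _ _)
  · exact det_vandermonde_ne_zero_iff.2 (hrow.comp (Fin.succ_injective _))
  · exact det_vandermonde_ne_zero_iff.2 (hrow.comp (Fin.castSucc_injective _))
  · exact det_vandermonde_ne_zero_iff.2 (hcol.comp (Fin.succ_injective _))
  · exact det_vandermonde_ne_zero_iff.2 (hcol.comp (Fin.castSucc_injective _))

theorem bilinearDefect_eq_zero (τ : R) (u v : Fin (n + 2) → R) : bilinearDefect τ u v = 0 := by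
  have hgeneric := congrArg (specialize τ u v) ((mul_eq_zero_iff_left
    (bilinearFactor_generic_ne_zero n)).1 (bilinearFactor_mul_bilinearDefect _ _ _))
  have hrow := congrFun (specialize_comp_genericRow τ u v)
  have hcol := congrFun (specialize_comp_genericCol τ u v)
  simp only [Function.comp_apply] at hrow hcol
  simpa only [bilinearDefect, map_sub, map_mul, map_pow, map_spectralPartition,
    ← Function.comp_assoc, specialize_genericCrossing, specialize_comp_genericRow,
    specialize_comp_genericCol, hrow, hcol, map_zero] using hgeneric

end Bilinear

section PartialSums

variable {n : ℕ} {f : Fin n → ℤ} {i j : Fin n}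

lemma sum_filter_le_eq_sumBefore_add (f : Fin n → ℤ) (j : Fin n) :
    ∑ k with k ≤ j, f k = sumBefore f j + f j := by
  have hinsert : ({k | k ≤ j} : Finset (Fin n)) = insert j ({k | k < j} : Finset (Fin n)) := by
    ext k
    simp [le_iff_eq_or_lt]
  rw [hinsert, sum_insert (by simp), add_comm, sumBefore]

lemma forall_sum_filter_le_iff (f : Fin n → ℤ) (P : ℤ → Prop) (hP : P 0) :
    (∀ j, P (∑ k with k ≤ j, f k)) ↔ ∀ j, P (sumBefore f j) ∧ P (sumBefore f j + f j) := by
  simp only [sum_filter_le_eq_sumBefore_add]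
  refine ⟨fun h j => ⟨?_, h j⟩, fun h j => (h j).2⟩
  cases n with
  | zero => exact j.elim0
  | succ n =>
    cases j using Fin.cases with
    | zero => rwa [sumBefore_zero]
    | succ j =>
      have hprefix : ({k | k < j.succ} : Finset (Fin (n + 1))) =
          ({k | k ≤ j.castSucc} : Finset (Fin (n + 1))) := by
        ext k
        simp [Fin.lt_def, Fin.le_def]
      rw [sumBefore, hprefix, sum_filter_le_eq_sumBefore_add]
      exact h _

lemma sumBefore_last_add (f : Fin (n + 1) → ℤ) :
    sumBefore f (Fin.last n) + f (Fin.last n) = ∑ j, f j := by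
  rw [sumBefore_last, Fin.sum_univ_castSucc]

lemma sumBefore_nonneg (hf : ∀ j, 0 ≤ f j) (j : Fin n) : 0 ≤ sumBefore f j :=
  sum_nonneg fun k _ => hf k

lemma sumBefore_add_le_sumBefore (hf : ∀ j, 0 ≤ f j) (hij : i < j) :
    sumBefore f i + f i ≤ sumBefore f j := by
  rw [← sum_filter_le_eq_sumBefore_add, sumBefore]
  refine sum_le_sum_of_subset_of_nonneg (fun k hk => ?_) fun k _ _ => hf k
  simp only [mem_filter, mem_univ, true_and] at hk ⊢
  exact hk.trans_lt hij

lemma exists_lt_pos_of_sumBefore_pos (h : 0 < sumBefore f j) : ∃ i < j, 0 < f i := by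
  by_contra! hcon
  exact h.not_ge (sum_nonpos fun k hk => hcon k (by simpa using hk))

lemma exists_gt_pos_of_sumBefore_add_lt (h : sumBefore f j + f j < ∑ i, f i) :
    ∃ i > j, 0 < f i := by
  by_contra! hcon
  rw [← sum_filter_le_eq_sumBefore_add, ← sum_filter_add_sum_filter_not univ (· ≤ j)] at h
  exact (lt_add_iff_pos_right _ |>.1 h).not_ge (sum_nonpos fun k hk => hcon k (by simpa using hk))

lemma sumBefore_comp_rev (f : Fin n → ℤ) (j : Fin n) :
    sumBefore (fun k => f k.rev) j = ∑ k, f k - sumBefore f j.rev - f j.rev := by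
  have hrev : sumBefore (fun k => f k.rev) j = ∑ k with ¬ k ≤ j.rev, f k := by
    rw [sumBefore, sum_filter, sum_filter, ← Equiv.sum_comp Fin.revPerm]
    simp [Fin.rev_lt_iff]
  rw [hrev, sub_sub, ← sum_filter_le_eq_sumBefore_add, eq_sub_iff_add_eq, add_comm,
    sum_filter_add_sum_filter_not]

end PartialSums

section AlternatingSignMatrix

variable {n : ℕ} {A : Fin n → Fin n → ℤ}

/-- The state of the edge by which row `i` enters the site `(i, j)`. -/
def leftEdge (A : Fin n → Fin n → ℤ) (i j : Fin n) : ℤ := sumBefore (A i) j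

/-- The state of the edge by which column `j` enters the site `(i, j)`. -/
def topEdge (A : Fin n → Fin n → ℤ) (i j : Fin n) : ℤ := sumBefore (fun i' => A i' j) i

/-- The sites of an alternating sign matrix which carry the weight `a` of the six-vertex model. -/
def IsFlat (A : Fin n → Fin n → ℤ) (i j : Fin n) : Prop :=
  A i j = 0 ∧ leftEdge A i j = topEdge A i j

instance (A : Fin n → Fin n → ℤ) (i j : Fin n) : Decidable (IsFlat A i j) :=
  inferInstanceAs (Decidable (_ ∧ _))

lemma isIce_cases {h v e : ℤ} (H : IsIce h v e) :
    (h = 0 ∧ v = 0 ∧ e = 0) ∨ (h = 0 ∧ v = 0 ∧ e = 1) ∨ (h = 1 ∧ v = 1 ∧ e = 0) ∨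
      (h = 1 ∧ v = 1 ∧ e = -1) ∨ (h = 0 ∧ v = 1 ∧ e = 0) ∨ (h = 1 ∧ v = 0 ∧ e = 0) := by
  unfold IsIce at H
  lia

lemma isASM_iff : IsASM A ↔ (∀ i, ∑ j, A i j = 1) ∧ (∀ j, ∑ i, A i j = 1) ∧
    ∀ i j, IsIce (leftEdge A i j) (topEdge A i j) (A i j) := by
  have hP : (0 : ℤ) = 0 ∨ (0 : ℤ) = 1 := Or.inl rfl
  have hrow (i) := forall_sum_filter_le_iff (A i) (fun s => s = 0 ∨ s = 1) hP
  have hcol (j) := forall_sum_filter_le_iff (fun i => A i j) (fun s => s = 0 ∨ s = 1) hP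
  constructor
  · rintro ⟨-, hr, hc, hr', hc'⟩
    exact ⟨hr', hc', fun i j => ⟨((hrow i).1 (hr i) j).1, ((hrow i).1 (hr i) j).2,
      ((hcol j).1 (fun i => hc i j) i).1, ((hcol j).1 (fun i => hc i j) i).2⟩⟩
  · rintro ⟨hr, hc, hice⟩
    refine ⟨fun i j => ?_, fun i => (hrow i).2 fun j => ⟨(hice i j).1, (hice i j).2.1⟩,
      fun i j => (hcol j).2 (fun i => (hice i j).2.2) i, hr, hc⟩
    have := hice i j
    unfold IsIce at this
    lia

open Classical in
lemma partitionFunction_zero_eq_sum_isASM {R : Type*} [CommSemiring R]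
    (W : Fin n → Fin n → VertexWeights R) :
    partitionFunction W 0 = ∑ e : Fin n → Fin n → Fin 3, if IsASM (asmMat e) then
      ∏ i, ∏ j, (W i j).weight (leftEdge (asmMat e) i j) (topEdge (asmMat e) i j) (asmMat e i j)
      else 0 := by
  refine sum_congr rfl fun e _ => ?_
  simp only [Pi.zero_apply, zero_add]
  by_cases hASM : IsASM (asmMat e)
  · rw [if_pos hASM]
    obtain ⟨hr, hc, -⟩ := isASM_iff.1 hASM
    rw [if_pos ⟨hr, hc⟩]
    simp only [rowWeight, zero_add]
    rfl
  · rw [if_neg hASM]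
    refine ite_eq_right_iff.2 fun ⟨hr, hc⟩ => ?_
    obtain ⟨i, j, hij⟩ : ∃ i j, ¬ IsIce (leftEdge (asmMat e) i j) (topEdge (asmMat e) i j)
        (asmMat e i j) := by
      by_contra! hice
      exact hASM (isASM_iff.2 ⟨hr, hc, hice⟩)
    refine prod_eq_zero (mem_univ i) (prod_eq_zero (mem_univ j) (if_neg ?_))
    rw [zero_add]
    exact hij

end AlternatingSignMatrix

section Statistics

variable {n : ℕ} {A : Fin n → Fin n → ℤ}

lemma sum_inversions_eq (A : Fin n → Fin n → ℤ) :
    (∑ i : Fin n, ∑ i' : Fin n, ∑ j : Fin n, ∑ j' : Fin n,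
      if i < i' ∧ j' ≤ j then A i j * A i' j' else 0) =
    ∑ i, ∑ j, topEdge A i j * (leftEdge A i j + A i j) := by
  rw [sum_comm]
  refine sum_congr rfl fun i' _ => ?_
  rw [sum_comm]
  refine sum_congr rfl fun j _ => ?_
  rw [leftEdge, topEdge, ← sum_filter_le_eq_sumBefore_add, sumBefore, sum_mul_sum, sum_filter]
  refine sum_congr rfl fun i _ => ?_
  by_cases h : i < i' <;> simp [h, sum_filter]

lemma sum_sum_leftEdge (hc : ∀ j, ∑ i, A i j = 1) :
    ∑ i, ∑ j, leftEdge A i j = ∑ j : Fin n, ∑ j' : Fin n, if j' < j then 1 else 0 := by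
  rw [sum_comm]
  refine sum_congr rfl fun j _ => ?_
  simp only [leftEdge, sumBefore]
  rw [sum_comm, sum_filter]
  simp only [hc]

lemma sum_sum_topEdge (hr : ∀ i, ∑ j, A i j = 1) :
    ∑ i, ∑ j, topEdge A i j = ∑ i : Fin n, ∑ i' : Fin n, if i' < i then 1 else 0 := by
  rw [sum_comm]
  exact sum_sum_leftEdge (A := fun j i => A i j) hr

lemma sum_sum_one_sub_edges (hr : ∀ i, ∑ j, A i j = 1) (hc : ∀ j, ∑ i, A i j = 1) :
    ∑ i, ∑ j, (1 - leftEdge A i j - topEdge A i j - A i j) = 0 := by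
  have hsum : ∑ i, ∑ j, A i j = ∑ i : Fin n, ∑ j : Fin n, if i = j then (1 : ℤ) else 0 := by
    simp [hr]
  simp only [sum_sub_distrib]
  rw [sum_sum_leftEdge hc, sum_sum_topEdge hr, sum_comm (f := fun i i' => if i' < i then _ else _),
    hsum]
  nth_rw 3 [sum_comm]
  simp only [← sum_sub_distrib]
  refine sum_eq_zero fun i _ => sum_eq_zero fun j _ => ?_
  rcases lt_trichotomy i j with h | h | h
  · simp [h, h.ne, h.le.not_gt]
  · simp [h]
  · simp [h, h.ne', h.le.not_gt]

lemma card_isFlat (hA : IsASM A) :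
    (univ.filter fun p : Fin n × Fin n => IsFlat A p.1 p.2).card = 2 * nuASM A := by
  obtain ⟨hr, hc, hice⟩ := isASM_iff.1 hA
  have hflat (i j) : (if IsFlat A i j then 1 else 0 : ℤ) =
      2 * (topEdge A i j * (leftEdge A i j + A i j)) +
        (1 - leftEdge A i j - topEdge A i j - A i j) := by
    unfold IsFlat
    obtain h | h | h | h | h | h := isIce_cases (hice i j) <;> simp [h]
  have hnonneg (i j) : 0 ≤ topEdge A i j * (leftEdge A i j + A i j) := by
    obtain h | h | h | h | h | h := isIce_cases (hice i j) <;> simp [h]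
  zify
  rw [nuASM, sum_inversions_eq, Int.toNat_of_nonneg (sum_nonneg fun i _ => sum_nonneg fun j _ =>
    hnonneg i j), card_filter, Fintype.sum_prod_type]
  push_cast
  simp only [hflat, sum_add_distrib, ← mul_sum]
  rw [sum_sum_one_sub_edges hr hc, add_zero]

lemma card_isFlat_firstRow {A : Fin (n + 1) → Fin (n + 1) → ℤ} (hA : IsASM A) :
    (univ.filter fun j => IsFlat A 0 j).card = rhoT A := by
  obtain ⟨hr, -, hice⟩ := isASM_iff.1 hA
  refine congrArg card (filter_congr fun j _ => ?_)
  change (A 0 j = 0 ∧ sumBefore (A 0) j = sumBefore (fun i' => A i' j) 0) ↔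
    A 0 j = 0 ∧ ∃ j', j < j' ∧ A 0 j' = 1
  have hice₀ (j) : IsIce (sumBefore (A 0) j) 0 (A 0 j) := by
    simpa [topEdge, leftEdge] using hice 0 j
  unfold IsIce at hice₀
  have hnonneg (j) : 0 ≤ A 0 j := by have := hice₀ j; lia
  rw [sumBefore_zero]
  refine and_congr_right fun h0 => ⟨fun h => ?_, fun ⟨j', hj, h⟩ => ?_⟩
  · obtain ⟨j', hj, hpos⟩ := exists_gt_pos_of_sumBefore_add_lt (f := A 0) (j := j) (by
      rw [h, h0, hr]; norm_num)
    exact ⟨j', hj, by have := hice₀ j'; lia⟩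
  · have := sumBefore_add_le_sumBefore hnonneg hj
    have := sumBefore_nonneg hnonneg j
    have := hice₀ j'
    lia

lemma card_isFlat_lastCol {A : Fin (n + 1) → Fin (n + 1) → ℤ} (hA : IsASM A) :
    (univ.filter fun i => IsFlat A i (Fin.last n)).card = rhoR A := by
  obtain ⟨hr, -, hice⟩ := isASM_iff.1 hA
  refine congrArg card (filter_congr fun i _ => ?_)
  change (A i (Fin.last n) = 0 ∧ sumBefore (A i) (Fin.last n) =
    sumBefore (fun i' => A i' (Fin.last n)) i) ↔
    A i (Fin.last n) = 0 ∧ ∃ i', i' < i ∧ A i' (Fin.last n) = 1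
  have hlast (i) := (sumBefore_last_add (A i)).trans (hr i)
  have hice₀ (i) := hice i (Fin.last n)
  unfold IsIce leftEdge topEdge at hice₀
  have hnonneg (i) : 0 ≤ A i (Fin.last n) := by have := hice₀ i; have := hlast i; lia
  refine and_congr_right fun h0 => ⟨fun h => ?_, fun ⟨i', hi, h⟩ => ?_⟩
  · have := hlast i
    obtain ⟨i', hi, hpos⟩ := exists_lt_pos_of_sumBefore_pos
      (f := fun i' => A i' (Fin.last n)) (j := i) (by lia)
    exact ⟨i', hi, by have := hice₀ i'; lia⟩
  · have := sumBefore_add_le_sumBefore hnonneg hi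
    have := sumBefore_nonneg hnonneg i'
    have := hice₀ i
    have := hlast i
    lia

end Statistics

section Markers

variable {α : Type*} {n : ℕ}

/-- The family with value `s` at the first index and `r` at the others. -/
def markFirst (s r : α) (i : Fin n) : α := if i.val = 0 then s else r

/-- The family with value `s` at the last index and `r` at the others. -/
def markLast (s r : α) (j : Fin n) : α := if j.val + 1 = n then s else r

@[simp] lemma markFirst_zero (s r : α) : markFirst s r (0 : Fin (n + 1)) = s := rfl

@[simp] lemma markFirst_succ (s r : α) (i : Fin n) : markFirst s r i.succ = r := rfl

@[simp] lemma markLast_last (s r : α) : markLast s r (Fin.last n) = s := if_pos rfl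

@[simp] lemma markLast_castSucc (s r : α) (j : Fin n) : markLast s r j.castSucc = r :=
  if_neg (by simpa using j.isLt.ne)

@[simp] lemma markFirst_self (r : α) (i : Fin n) : markFirst r r i = r := ite_self _

@[simp] lemma markLast_self (r : α) (j : Fin n) : markLast r r j = r := ite_self _

lemma markLast_rev (s r : α) (i : Fin n) : markLast s r i.rev = markFirst s r i := by
  have := i.isLt
  simp only [markLast, markFirst, Fin.val_rev]
  congr 1
  simp only [eq_iff_iff]
  lia

end Markers

section Refined

variable {R : Type*} {n : ℕ}

/-- The weights for which flat sites count `α`, entries `-1` count `y`, and the flat sites of the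
first row and of the last column count additional factors `z1` and `z2`. -/
def refinedWeights [MulOneClass R] (α y z1 z2 : R) (i j : Fin n) : VertexWeights R :=
  ⟨α * markFirst z1 1 i * markLast z2 1 j, 1, 1, y⟩

lemma weight_eq_ite_mul_ite [CommSemiring R] (a y : R) {h v e : ℤ} (H : IsIce h v e) :
    (⟨a, 1, 1, y⟩ : VertexWeights R).weight h v e =
      (if e = 0 ∧ h = v then a else 1) * if e = -1 then y else 1 := by
  unfold VertexWeights.weight
  obtain h | h | h | h | h | h := isIce_cases H <;> simp [h, IsIce]

lemma prod_ite_eq_pow_card {ι : Type*} [Fintype ι] [CommMonoid R] (P : ι → Prop)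
    [DecidablePred P] (a : R) : ∏ i, (if P i then a else 1) = a ^ (univ.filter P).card := by
  rw [← prod_filter, prod_const]

lemma prod_prod_ite_eq_pow_card {ι : Type*} [Fintype ι] [CommMonoid R] (P : ι → ι → Prop)
    [∀ i j, Decidable (P i j)] (a : R) :
    ∏ i, ∏ j, (if P i j then a else 1) = a ^ (univ.filter fun p : ι × ι => P p.1 p.2).card := by
  rw [← prod_ite_eq_pow_card, Fintype.prod_prod_type]

lemma prod_isFlat_markFirst [CommMonoid R] {A : Fin n → Fin n → ℤ} (hA : IsASM A) (z : R) :
    ∏ i, ∏ j, (if IsFlat A i j then markFirst z 1 i else 1) = z ^ rhoT A := by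
  cases n with
  | zero => simp [rhoT]
  | succ n =>
    rw [Fin.prod_univ_succ]
    simp [← card_isFlat_firstRow hA, prod_ite_eq_pow_card]

lemma prod_isFlat_markLast [CommMonoid R] {A : Fin n → Fin n → ℤ} (hA : IsASM A) (z : R) :
    ∏ i, ∏ j, (if IsFlat A i j then markLast z 1 j else 1) = z ^ rhoR A := by
  cases n with
  | zero => simp [rhoR]
  | succ n =>
    rw [prod_comm, Fin.prod_univ_castSucc]
    simp [← card_isFlat_lastCol hA, prod_ite_eq_pow_card]

lemma partitionFunction_refinedWeights [CommRing R] (α y z1 z2 : R) :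
    partitionFunction (refinedWeights (n := n) α y z1 z2) 0 = Zqua n (α ^ 2) y z1 z2 1 1 := by
  classical
  rw [partitionFunction_zero_eq_sum_isASM, Zqua]
  refine sum_congr rfl fun e _ => ?_
  split_ifs with hA
  · have hweight (i j : Fin n) : (refinedWeights α y z1 z2 i j).weight (leftEdge (asmMat e) i j)
        (topEdge (asmMat e) i j) (asmMat e i j) =
          (if IsFlat (asmMat e) i j then α else 1) * (if asmMat e i j = -1 then y else 1) *
          (if IsFlat (asmMat e) i j then markFirst z1 1 i else 1) *
          (if IsFlat (asmMat e) i j then markLast z2 1 j else 1) := by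
      refine (weight_eq_ite_mul_ite _ _ ((isASM_iff.1 hA).2.2 i j)).trans ?_
      change (if IsFlat (asmMat e) i j then _ else 1) * _ = _
      split_ifs <;> ring
    simp only [hweight, prod_mul_distrib, prod_isFlat_markFirst hA, prod_isFlat_markLast hA,
      prod_prod_ite_eq_pow_card, card_isFlat hA, pow_mul, one_pow, mul_one]
    rfl
  · rfl

end Refined

section Antitranspose

variable {n : ℕ} {A : Fin n → Fin n → ℤ}

/-- The reflection of a square array in its antidiagonal. -/
def antitranspose {α : Type*} (A : Fin n → Fin n → α) (i j : Fin n) : α := A j.rev i.rev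

lemma antitranspose_involutive {α : Type*} :
    Function.Involutive (antitranspose : (Fin n → Fin n → α) → Fin n → Fin n → α) := fun A => by
  funext i j
  simp [antitranspose]

lemma leftEdge_antitranspose (hc : ∀ j, ∑ i, A i j = 1) (i j : Fin n) :
    leftEdge (antitranspose A) i j = 1 - topEdge A j.rev i.rev - A j.rev i.rev := by
  rw [← hc i.rev]
  exact sumBefore_comp_rev (fun k => A k i.rev) j

lemma topEdge_antitranspose (hr : ∀ i, ∑ j, A i j = 1) (i j : Fin n) :
    topEdge (antitranspose A) i j = 1 - leftEdge A j.rev i.rev - A j.rev i.rev := by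
  rw [← hr j.rev]
  exact sumBefore_comp_rev (A j.rev) i

lemma isIce_reflect {h v e : ℤ} : IsIce (1 - v - e) (1 - h - e) e ↔ IsIce h v e := by
  unfold IsIce
  lia

lemma isASM_antitranspose (hA : IsASM A) : IsASM (antitranspose A) := by
  obtain ⟨hr, hc, hice⟩ := isASM_iff.1 hA
  refine isASM_iff.2 ⟨fun i => ?_, fun j => ?_, fun i j => ?_⟩
  · exact (Equiv.sum_comp Fin.revPerm fun k => A k i.rev).trans (hc _)
  · exact (Equiv.sum_comp Fin.revPerm (A j.rev)).trans (hr _)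
  · have := hice j.rev i.rev
    rwa [leftEdge_antitranspose hc, topEdge_antitranspose hr, antitranspose, isIce_reflect]

lemma VertexWeights.weight_reflect {R : Type*} [Zero R] (w : VertexWeights R) (h v e : ℤ) :
    w.weight (1 - v - e) (1 - h - e) e = w.weight h v e := by
  have hflat : 1 - v - e = 1 - h - e ↔ h = v := by lia
  simp only [weight, isIce_reflect, hflat]

lemma prod_prod_antitranspose {M : Type*} [CommMonoid M] (f : Fin n → Fin n → M) :
    ∏ i, ∏ j, antitranspose f i j = ∏ i, ∏ j, f i j := by
  simp only [antitranspose]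
  rw [prod_comm]
  exact (Equiv.prod_comp Fin.revPerm fun i : Fin n => ∏ j : Fin n, f i j.rev).trans
    (prod_congr rfl fun i _ => Equiv.prod_comp Fin.revPerm (f i))

lemma partitionFunction_antitranspose {R : Type*} [CommSemiring R]
    (W : Fin n → Fin n → VertexWeights R) :
    partitionFunction (antitranspose W) 0 = partitionFunction W 0 := by
  classical
  rw [partitionFunction_zero_eq_sum_isASM, partitionFunction_zero_eq_sum_isASM,
    ← Equiv.sum_comp antitranspose_involutive.toPerm]
  refine sum_congr rfl fun e _ => ?_
  have hmat : asmMat (antitranspose e) = antitranspose (asmMat e) := rfl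
  have hiff : IsASM (antitranspose (asmMat e)) ↔ IsASM (asmMat e) :=
    ⟨fun h => antitranspose_involutive (asmMat e) ▸ isASM_antitranspose h, isASM_antitranspose⟩
  simp only [Function.Involutive.coe_toPerm, hmat, hiff]
  split_ifs with hA
  · obtain ⟨hr, hc, -⟩ := isASM_iff.1 hA
    rw [← prod_prod_antitranspose fun i j => (W i j).weight _ _ _]
    simp only [leftEdge_antitranspose hc, topEdge_antitranspose hr, antitranspose,
      VertexWeights.weight_reflect]
  · rfl

lemma Zqua_right_eq_top {R : Type*} [CommRing R] (n : ℕ) (α y z : R) :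
    Zqua n (α ^ 2) y 1 z 1 1 = Zqua n (α ^ 2) y z 1 1 1 := by
  rw [← partitionFunction_refinedWeights, ← partitionFunction_refinedWeights,
    ← partitionFunction_antitranspose]
  congr 1
  funext i j
  simp [antitranspose, refinedWeights, markLast_rev]

end Antitranspose

section Gauge

lemma prod_zpow_eq_zpow_sum {ι K : Type*} [Field K] {g : K} (hg : g ≠ 0) (s : Finset ι)
    (f : ι → ℤ) : ∏ i ∈ s, g ^ f i = g ^ ∑ i ∈ s, f i := by
  classical
  induction s using Finset.induction_on with
  | empty => simp
  | insert a s ha ih => rw [prod_insert ha, sum_insert ha, zpow_add₀ hg, ih]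

lemma VertexWeights.weight_gauge {K : Type*} [Field K] {w w' : VertexWeights K} {t g : K}
    (hg : g ≠ 0) {h v e : ℤ} (ha : e = 0 → h = v → w.a = t * w'.a) (hb : w.b = t * w'.b)
    (hc : w.c = t * g * w'.c) (hd : v = 1 → h + e = 0 → w.d * g = t * w'.d) :
    w.weight h v e = t * g ^ e * w'.weight h v e := by
  unfold weight
  split_ifs with hice h1 h2 h3
  · simp [h1, hc]
  · have hd' := hd (by unfold IsIce at hice; lia) (by unfold IsIce at hice; lia)
    rw [h2, zpow_neg_one, mul_right_comm, ← hd', mul_inv_cancel_right₀ hg]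
  · have he : e = 0 := by unfold IsIce at hice; lia
    rw [ha he h3, he, zpow_zero, mul_one]
  · have he : e = 0 := by unfold IsIce at hice; lia
    rw [hb, he, zpow_zero, mul_one]
  · rw [mul_zero]

/-- No entry of the first row or of the last column is `-1`, and a corner entry `0` has different
incoming edges; this frees the corresponding weights from any constraint. -/
lemma partitionFunction_gauge {K : Type*} [Field K] {k : ℕ}
    {W W' : Fin (k + 1) → Fin (k + 1) → VertexWeights K} {t : Fin (k + 1) → Fin (k + 1) → K}
    {g κ : Fin (k + 1) → K} (hg : ∀ i, g i ≠ 0) (hκ : ∀ j, κ j ≠ 0)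
    (ha : ∀ i j, i ≠ 0 ∨ j ≠ Fin.last k → (W i j).a = t i j * (W' i j).a)
    (hb : ∀ i j, (W i j).b = t i j * (W' i j).b)
    (hc : ∀ i j, (W i j).c = t i j * (g i * κ j) * (W' i j).c)
    (hd : ∀ i j, i ≠ 0 → j ≠ Fin.last k → (W i j).d * (g i * κ j) = t i j * (W' i j).d) :
    partitionFunction W 0 =
      (∏ i, ∏ j, t i j) * (∏ i, g i) * (∏ j, κ j) * partitionFunction W' 0 := by
  classical
  rw [partitionFunction_zero_eq_sum_isASM, partitionFunction_zero_eq_sum_isASM, mul_sum]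
  refine sum_congr rfl fun e _ => ?_
  split_ifs with hA
  · obtain ⟨hr, hcol, -⟩ := isASM_iff.1 hA
    have htop (j) : topEdge (asmMat e) 0 j = 0 := sumBefore_zero _
    have hright (i) : leftEdge (asmMat e) i (Fin.last k) + asmMat e i (Fin.last k) = 1 :=
      (sumBefore_last_add _).trans (hr i)
    have hweight (i j) : (W i j).weight (leftEdge (asmMat e) i j) (topEdge (asmMat e) i j)
        (asmMat e i j) = t i j * (g i * κ j) ^ asmMat e i j * (W' i j).weight
          (leftEdge (asmMat e) i j) (topEdge (asmMat e) i j) (asmMat e i j) := by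
      refine VertexWeights.weight_gauge (mul_ne_zero (hg i) (hκ j)) (fun he h => ha i j ?_) (hb i j)
        (hc i j) (fun hv he => hd i j ?_ ?_)
      · by_contra! ⟨rfl, rfl⟩
        have := htop (Fin.last k)
        have := hright 0
        lia
      · rintro rfl
        have := htop j
        lia
      · rintro rfl
        have := hright i
        lia
    simp only [hweight, prod_mul_distrib, mul_zpow]
    rw [prod_comm (f := fun i j => κ j ^ asmMat e i j)]
    simp only [prod_zpow_eq_zpow_sum (hg _), prod_zpow_eq_zpow_sum (hκ _), hr, hcol, zpow_one,
      mul_assoc]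
  · rw [mul_zero]

end Gauge

section Corner

variable {M R : Type*} {k : ℕ}

lemma prod_markFirst [CommMonoid M] (s r : M) :
    ∏ i : Fin (k + 1), markFirst s r i = s * r ^ k := by
  simp [Fin.prod_univ_succ]

lemma prod_markLast [CommMonoid M] (s r : M) :
    ∏ j : Fin (k + 1), markLast s r j = s * r ^ k := by
  simp [Fin.prod_univ_castSucc, mul_comm]

lemma prod_prod_apply_markFirst_markLast [CommMonoid M] {ι κ : Type*} (f : ι → κ → M) (s r : ι)
    (s' r' : κ) : ∏ i : Fin (k + 1), ∏ j : Fin (k + 1), f (markFirst s r i) (markLast s' r' j) =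
      f s s' * f s r' ^ k * (f r s' * f r r' ^ k) ^ k := by
  rw [Fin.prod_univ_succ]
  simp [Fin.prod_univ_castSucc, mul_comm]

variable [CommRing R]

/-- The refined weights, with the weight `δ` for the entry `1` at the top right corner. -/
def cornerWeights (δ α y z1 z2 : R) (i j : Fin (k + 1)) : VertexWeights R :=
  { refinedWeights α y z1 z2 i j with c := markFirst (markLast δ 1 j) 1 i }

lemma cornerWeights_one (α y z1 z2 : R) :
    cornerWeights (k := k) 1 α y z1 z2 = refinedWeights α y z1 z2 := by
  funext i j
  simp [cornerWeights, refinedWeights]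

lemma partitionFunction_cornerWeights_eq_add_offCorner (δ α y z1 z2 : R) :
    partitionFunction (cornerWeights (k := k) δ α y z1 z2) 0 =
      δ * ((α ^ 2 * z1 * z2) ^ k * Zun k (α ^ 2) y) +
        offCorner (cornerWeights (k := k) 1 α y z1 z2) := by
  have hminor : (fun i j : Fin k => cornerWeights δ α y z1 z2 i.succ j.castSucc) =
      refinedWeights α y 1 1 := by
    funext i j
    simp [cornerWeights, refinedWeights]
  have hoff : offCorner (cornerWeights (k := k) δ α y z1 z2) =
      offCorner (cornerWeights (k := k) 1 α y z1 z2) := by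
    refine offCorner_congr (fun j => ?_) fun i j => ?_ <;> simp [cornerWeights]
  rw [partitionFunction_eq_corner, hoff, hminor, partitionFunction_refinedWeights, Zun]
  simp [cornerWeights, refinedWeights]
  ring

lemma partitionFunction_cornerWeights (δ α y z1 z2 : R) :
    partitionFunction (cornerWeights (k := k) δ α y z1 z2) 0 =
      Zbaradj (k + 1) (α ^ 2) y z1 z2 + (δ - 1) * ((α ^ 2 * z1 * z2) ^ k * Zun k (α ^ 2) y) := by
  rw [Zbaradj, ← partitionFunction_refinedWeights, ← cornerWeights_one,
    partitionFunction_cornerWeights_eq_add_offCorner,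
    partitionFunction_cornerWeights_eq_add_offCorner 1]
  ring

end Corner

section Marked

variable {R : Type*} [CommRing R]

/-- The partition function of size `k` with the row parameters `us, r, r, …` and the column
parameters `1, 1, …, vs`. -/
def markedPartition (τ r us vs : R) (k : ℕ) : R :=
  spectralPartition τ (markFirst us r : Fin k → R) (markLast vs 1 : Fin k → R) 0

lemma markedPartition_bilinear (τ r us vs : R) (n : ℕ) :
    (us - τ ^ 2 * vs) * (us - vs) * ((r - τ ^ 2) * (r - 1)) *
        (markedPartition τ r r vs (n + 1) * markedPartition τ r us 1 (n + 1)) -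
      (us - τ ^ 2) * (us - 1) * ((r - τ ^ 2 * vs) * (r - vs)) *
        (markedPartition τ r r 1 (n + 1) * markedPartition τ r us vs (n + 1)) -
      (r - us) * (1 - vs) *
        (markedPartition τ r us vs (n + 2) * markedPartition τ r r 1 n) = 0 := by
  have hrow_succ : (markFirst us r : Fin (n + 2) → R) ∘ Fin.succ = markFirst r r := by
    funext i
    simp
  have hrow_castSucc : (markFirst us r : Fin (n + 2) → R) ∘ Fin.castSucc = markFirst us r := rfl
  have hrow_interior : (markFirst us r : Fin (n + 2) → R) ∘ interior = markFirst r r := by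
    funext i
    simp [interior]
  have hcol_succ : (markLast vs 1 : Fin (n + 2) → R) ∘ Fin.succ = markLast vs 1 := by
    funext j
    simp [markLast]
  have hcol_castSucc : (markLast vs 1 : Fin (n + 2) → R) ∘ Fin.castSucc = markLast 1 1 := by
    funext j
    simp
  have hcol_interior : (markLast vs 1 : Fin (n + 2) → R) ∘ interior = markLast 1 1 := by
    funext j
    simp [interior, ← Fin.castSucc_succ]
  have hrow_last : markFirst us r (Fin.last (n + 1)) = r := markFirst_succ us r (Fin.last n)
  have hcol_zero : markLast vs 1 (0 : Fin (n + 2)) = 1 :=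
    markLast_castSucc vs 1 (0 : Fin (n + 1))
  have h := bilinearDefect_eq_zero τ (markFirst us r : Fin (n + 2) → R) (markLast vs 1)
  simpa only [markedPartition, bilinearDefect, hrow_succ, hrow_castSucc, hrow_interior, hrow_last,
    hcol_succ, hcol_castSucc, hcol_interior, hcol_zero, markFirst_zero, markLast_last, mul_one]
    using h

end Marked

section Recursion

variable {R S : Type*} [CommRing R] [CommRing S]

/-- The difference of the two sides of the recursion for `Zbaradj (n + 2)`. -/
noncomputable def recursionDefect (n : ℕ) (x y z1 z2 : R) : R :=
  (z1 - 1) * (z2 - 1) * Zbaradj (n + 2) x y z1 z2 * Zun n x y -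
    (y * z1 * z2 * Zbaradj (n + 1) x y z1 z2 * Zun (n + 1) x y
      + ((z1 - 1) * (z2 - 1) - y * z1 * z2) * Zsing (n + 1) x y z1 * Zsing (n + 1) x y z2
      + (z1 - 1) * (z2 - 1) * (x * z1 * z2) ^ (n + 1) * Zun (n + 1) x y * Zun n x y)

lemma map_Zqua (φ : R →+* S) (n : ℕ) (x y z1 z2 z3 z4 : R) :
    φ (Zqua n x y z1 z2 z3 z4) = Zqua n (φ x) (φ y) (φ z1) (φ z2) (φ z3) (φ z4) := by
  classical
  simp only [Zqua, map_sum, apply_ite φ, map_mul, map_pow, map_zero]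

lemma map_recursionDefect (φ : R →+* S) (n : ℕ) (x y z1 z2 : R) :
    φ (recursionDefect n x y z1 z2) = recursionDefect n (φ x) (φ y) (φ z1) (φ z2) := by
  simp only [recursionDefect, Zbaradj, Zsing, Zun, map_sub, map_add, map_mul, map_pow, map_one,
    map_Zqua]

end Recursion

section Spectrum

variable {K : Type*} [Field K] {τ α y r us vs z1 z2 : K}

/-- The spectral weight `b` at a site with parameters `u` and `v`. -/
def bWeight (τ u v : K) : K := (spectralWeights τ u v).b

lemma bWeight_eq (τ u v : K) : bWeight τ u v = τ * (u - v) := rfl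

lemma bWeight_mul_bWeight_sub (τ u u' v v' : K) :
    bWeight τ u v * bWeight τ u' v' - bWeight τ u' v * bWeight τ u v' =
      τ ^ 2 * ((u - u') * (v - v')) := by
  simp only [bWeight_eq]
  ring

/-- The spectral weight `b` at a site with parameters `u` and `v` is nonzero, and `t` is the ratio
of the spectral weights `a` and `b`. -/
structure IsFlatRatio (τ u v t : K) : Prop where
  ne_zero : bWeight τ u v ≠ 0
  flat : u - τ ^ 2 * v = bWeight τ u v * t

/-- The row parameters `us, r, r, …` and the column parameters `1, 1, …, vs` yield, up to a gauge
transformation, the refined weights with fugacities `α`, `y`, `z1`, `z2`. -/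
structure IsRefinedSpectrum (τ r us vs α y z1 z2 : K) : Prop where
  bulk : IsFlatRatio τ r 1 α
  row : IsFlatRatio τ us 1 (α * z1)
  col : IsFlatRatio τ r vs (α * z2)
  corner : bWeight τ us vs ≠ 0
  neg : (1 - τ ^ 2) ^ 2 * r = bWeight τ r 1 ^ 2 * y

namespace IsRefinedSpectrum

variable (S : IsRefinedSpectrum τ r us vs α y z1 z2)
include S

lemma forget_col : IsRefinedSpectrum τ r us 1 α y z1 1 :=
  ⟨S.bulk, S.row, by simpa using S.bulk, S.row.ne_zero, S.neg⟩

lemma forget_row : IsRefinedSpectrum τ r r vs α y 1 z2 :=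
  ⟨S.bulk, by simpa using S.bulk, S.col, S.col.ne_zero, S.neg⟩

lemma markedPartition_eq_partitionFunction_cornerWeights (k : ℕ) :
    markedPartition τ r us vs (k + 1) =
      (∏ i : Fin (k + 1), ∏ j : Fin (k + 1), bWeight τ (markFirst us r i) (markLast vs 1 j)) *
        (∏ i : Fin (k + 1), markFirst (bWeight τ us 1)⁻¹ (bWeight τ r 1)⁻¹ i) *
        (∏ j : Fin (k + 1), markLast (bWeight τ r 1 / bWeight τ r vs) 1 j) *
        partitionFunction (cornerWeights (k := k)
          (bWeight τ us 1 * bWeight τ r vs / (bWeight τ r 1 * bWeight τ us vs)) α y z1 z2) 0 := by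
  have hA := S.row.ne_zero
  have hB := S.col.ne_zero
  have hC := S.bulk.ne_zero
  have hD := S.corner
  refine partitionFunction_gauge (Fin.cases ?_ fun i => ?_) (Fin.lastCases ?_ fun j => ?_)
    (Fin.cases (Fin.lastCases ?_ fun j => ?_) fun i => Fin.lastCases ?_ fun j => ?_)
    (fun i j => (mul_one _).symm)
    (Fin.cases (Fin.lastCases ?_ fun j => ?_) fun i => Fin.lastCases ?_ fun j => ?_)
    (Fin.cases (fun j h => absurd rfl h) fun i =>
      Fin.lastCases (fun _ h => absurd rfl h) fun j _ _ => ?_)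
  all_goals
    simp only [spectralWeights, cornerWeights, refinedWeights, markFirst_zero, markFirst_succ,
      markLast_last, markLast_castSucc, mul_one]
  · exact inv_ne_zero hA
  · exact inv_ne_zero hC
  · exact div_ne_zero hC hB
  · exact one_ne_zero
  · simp
  · exact fun _ => by simpa using S.row.flat
  · exact fun _ => S.col.flat
  · exact fun _ => by simpa using S.bulk.flat
  · field_simp
  · field_simp
  · field_simp
  · field_simp
  · rw [S.neg]
    field_simp

lemma markedPartition_mul (k : ℕ) :
    markedPartition τ r us vs (k + 1) * (bWeight τ us 1 * bWeight τ r vs * bWeight τ r 1 ^ k) =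
      (bWeight τ us 1 * bWeight τ r vs) ^ k * bWeight τ r 1 ^ (k * k) *
        (bWeight τ r 1 * bWeight τ us vs * Zbaradj (k + 1) (α ^ 2) y z1 z2 +
          (bWeight τ us 1 * bWeight τ r vs - bWeight τ r 1 * bWeight τ us vs) *
            ((α ^ 2 * z1 * z2) ^ k * Zun k (α ^ 2) y)) := by
  have hA := S.row.ne_zero
  have hB := S.col.ne_zero
  have hC := S.bulk.ne_zero
  have hD := S.corner
  rw [S.markedPartition_eq_partitionFunction_cornerWeights, partitionFunction_cornerWeights,
    prod_prod_apply_markFirst_markLast, prod_markFirst, prod_markLast, inv_pow]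
  field_simp
  ring

lemma markedPartition_row (k : ℕ) : markedPartition τ r us 1 (k + 1) =
    bWeight τ us 1 ^ k * bWeight τ r 1 ^ (k * k) * Zsing (k + 1) (α ^ 2) y z1 := by
  have hA := S.row.ne_zero
  have hC := S.bulk.ne_zero
  refine mul_right_cancel₀ (mul_ne_zero (mul_ne_zero hA hC) (pow_ne_zero k hC))
    ((S.forget_col.markedPartition_mul k).trans ?_)
  rw [Zbaradj, Zsing]
  ring

lemma markedPartition_col (k : ℕ) : markedPartition τ r r vs (k + 1) =
    bWeight τ r vs ^ k * bWeight τ r 1 ^ (k * k) * Zsing (k + 1) (α ^ 2) y z2 := by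
  have hB := S.col.ne_zero
  have hC := S.bulk.ne_zero
  refine mul_right_cancel₀ (mul_ne_zero (mul_ne_zero hC hB) (pow_ne_zero k hC))
    ((S.forget_row.markedPartition_mul k).trans ?_)
  rw [Zbaradj, Zsing, Zqua_right_eq_top]
  ring

lemma markedPartition_bulk_mul (m : ℕ) :
    markedPartition τ r r 1 m * bWeight τ r 1 ^ m =
      bWeight τ r 1 ^ (m * m) * Zun m (α ^ 2) y := by
  cases m with
  | zero =>
    rw [Zun, ← partitionFunction_refinedWeights]
    simp [markedPartition, spectralPartition, partitionFunction]
  | succ k =>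
    rw [S.forget_row.markedPartition_row, Zsing, Zun]
    ring

lemma markedPartition_mul_bulk (n : ℕ) :
    markedPartition τ r us vs (n + 2) * markedPartition τ r r 1 n *
        (bWeight τ us 1 * bWeight τ r vs * bWeight τ r 1 ^ (2 * n + 1)) =
      (bWeight τ us 1 * bWeight τ r vs) ^ n * bWeight τ r 1 ^ (2 * n * n + 2 * n + 1) *
        (bWeight τ us 1 * bWeight τ r vs *
          (bWeight τ r 1 * bWeight τ us vs * Zbaradj (n + 2) (α ^ 2) y z1 z2 +
            (bWeight τ us 1 * bWeight τ r vs - bWeight τ r 1 * bWeight τ us vs) *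
              ((α ^ 2 * z1 * z2) ^ (n + 1) * Zun (n + 1) (α ^ 2) y)) * Zun n (α ^ 2) y) := by
  have h := congrArg₂ (· * ·) (S.markedPartition_mul (n + 1)) (S.markedPartition_bulk_mul n)
  linear_combination h

lemma markedPartition_mul_bulk_succ (n : ℕ) :
    markedPartition τ r us vs (n + 1) * markedPartition τ r r 1 (n + 1) *
        (bWeight τ us 1 * bWeight τ r vs * bWeight τ r 1 ^ (2 * n + 1)) =
      (bWeight τ us 1 * bWeight τ r vs) ^ n * bWeight τ r 1 ^ (2 * n * n + 2 * n + 1) *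
        ((bWeight τ r 1 * bWeight τ us vs * Zbaradj (n + 1) (α ^ 2) y z1 z2 +
          (bWeight τ us 1 * bWeight τ r vs - bWeight τ r 1 * bWeight τ us vs) *
            ((α ^ 2 * z1 * z2) ^ n * Zun n (α ^ 2) y)) * Zun (n + 1) (α ^ 2) y) := by
  have h := congrArg₂ (· * ·) (S.markedPartition_mul n) (S.markedPartition_bulk_mul (n + 1))
  linear_combination h

lemma markedPartition_row_mul_col (n : ℕ) :
    markedPartition τ r r vs (n + 1) * markedPartition τ r us 1 (n + 1) *
        (bWeight τ us 1 * bWeight τ r vs * bWeight τ r 1 ^ (2 * n + 1)) =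
      (bWeight τ us 1 * bWeight τ r vs) ^ n * bWeight τ r 1 ^ (2 * n * n + 2 * n + 1) *
        (bWeight τ us 1 * bWeight τ r vs *
          (Zsing (n + 1) (α ^ 2) y z1 * Zsing (n + 1) (α ^ 2) y z2)) := by
  rw [S.markedPartition_row, S.markedPartition_col]
  ring

lemma flat_row_mul_flat_col : (us - τ ^ 2) * (r - τ ^ 2 * vs) =
    bWeight τ us 1 * bWeight τ r vs * (α ^ 2 * z1 * z2) := by
  have hrow := S.row.flat
  rw [mul_one] at hrow
  rw [hrow, S.col.flat]
  ring

lemma fugacity_neg : (z1 - 1) * (z2 - 1) * (bWeight τ us 1 * bWeight τ r vs) * α ^ 2 =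
    -(bWeight τ r 1 * bWeight τ us vs - bWeight τ us 1 * bWeight τ r vs) * y := by
  have hrow : bWeight τ us 1 * (α * (z1 - 1)) * bWeight τ r 1 = τ * ((r - us) * (1 - τ ^ 2)) := by
    linear_combination bWeight τ us 1 * S.bulk.flat - bWeight τ r 1 * S.row.flat +
      (us - τ ^ 2) * bWeight_eq τ r 1 - (r - τ ^ 2) * bWeight_eq τ us 1
  have hcol : bWeight τ r vs * (α * (z2 - 1)) * bWeight τ r 1 =
      -(τ * (r * (1 - vs) * (1 - τ ^ 2))) := by
    linear_combination bWeight τ r vs * S.bulk.flat - bWeight τ r 1 * S.col.flat +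
      (r - τ ^ 2 * vs) * bWeight_eq τ r 1 - (r - τ ^ 2) * bWeight_eq τ r vs
  refine mul_right_cancel₀ (pow_ne_zero 2 S.bulk.ne_zero) ?_
  rw [bWeight_mul_bWeight_sub]
  linear_combination bWeight τ us 1 * (α * (z1 - 1)) * bWeight τ r 1 * hcol -
    τ * (r * (1 - vs) * (1 - τ ^ 2)) * hrow - τ ^ 2 * (r - us) * (1 - vs) * S.neg

lemma row_mul_col :
    τ ^ 2 * ((us - τ ^ 2) * (us - 1) * ((r - τ ^ 2 * vs) * (r - vs))) =
      bWeight τ us 1 * bWeight τ r vs * (bWeight τ us 1 * bWeight τ r vs * (α ^ 2 * z1 * z2)) := by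
  rw [← S.flat_row_mul_flat_col, bWeight_eq, bWeight_eq]
  ring

lemma corner_mul_bulk :
    τ ^ 2 * ((us - τ ^ 2 * vs) * (us - vs) * ((r - τ ^ 2) * (r - 1))) =
      bWeight τ r 1 * bWeight τ us vs *
        (bWeight τ r 1 * bWeight τ us vs - bWeight τ us 1 * bWeight τ r vs +
          bWeight τ us 1 * bWeight τ r vs * (α ^ 2 * z1 * z2)) := by
  rw [← S.flat_row_mul_flat_col, bWeight_mul_bWeight_sub, bWeight_eq, bWeight_eq]
  ring

lemma zbaradj_relation (n : ℕ) :
    (bWeight τ r 1 * bWeight τ us vs - bWeight τ us 1 * bWeight τ r vs) *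
        (Zbaradj (n + 2) (α ^ 2) y z1 z2 * Zun n (α ^ 2) y -
          (α ^ 2 * z1 * z2) ^ (n + 1) * Zun (n + 1) (α ^ 2) y * Zun n (α ^ 2) y -
          Zsing (n + 1) (α ^ 2) y z1 * Zsing (n + 1) (α ^ 2) y z2) =
      bWeight τ us 1 * bWeight τ r vs * (α ^ 2 * z1 * z2) *
        (Zsing (n + 1) (α ^ 2) y z1 * Zsing (n + 1) (α ^ 2) y z2 -
          Zun (n + 1) (α ^ 2) y * Zbaradj (n + 1) (α ^ 2) y z1 z2) := by
  have hP := bWeight_mul_bWeight_sub τ r us 1 vs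
  have hlarge := S.markedPartition_mul_bulk n
  have hmiddle := S.markedPartition_mul_bulk_succ n
  have hsingle := S.markedPartition_row_mul_col n
  set AB := bWeight τ us 1 * bWeight τ r vs
  set CD := bWeight τ r 1 * bWeight τ us vs
  have hN : CD * AB * (AB ^ n * bWeight τ r 1 ^ (2 * n * n + 2 * n + 1)) ≠ 0 := by
    simp [AB, CD, S.row.ne_zero, S.col.ne_zero, S.bulk.ne_zero, S.corner]
  refine mul_left_cancel₀ hN ?_
  generalize bWeight τ r 1 ^ (2 * n + 1) = M at *
  linear_combination -(τ ^ 2 * (AB * M)) * markedPartition_bilinear τ r us vs n +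
    markedPartition τ r r vs (n + 1) * markedPartition τ r us 1 (n + 1) * (AB * M) *
      S.corner_mul_bulk + CD * (CD - AB + AB * (α ^ 2 * z1 * z2)) * hsingle -
    markedPartition τ r us vs (n + 1) * markedPartition τ r r 1 (n + 1) * (AB * M) *
      S.row_mul_col - AB * (AB * (α ^ 2 * z1 * z2)) * hmiddle +
    markedPartition τ r us vs (n + 2) * markedPartition τ r r 1 n * (AB * M) * hP -
    (CD - AB) * hlarge

lemma recursionDefect_eq_zero (hrow : r ≠ us) (hcol : vs ≠ 1) (n : ℕ) :
    recursionDefect n (α ^ 2) y z1 z2 = 0 := by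
  have hτ : τ ≠ 0 := fun h => S.bulk.ne_zero (by rw [bWeight_eq, h, zero_mul])
  have hP : bWeight τ r 1 * bWeight τ us vs - bWeight τ us 1 * bWeight τ r vs ≠ 0 := by
    rw [bWeight_mul_bWeight_sub]
    exact mul_ne_zero (pow_ne_zero 2 hτ)
      (mul_ne_zero (sub_ne_zero.2 hrow) (sub_ne_zero.2 hcol.symm))
  refine (mul_eq_zero_iff_left hP).1 ?_
  rw [recursionDefect]
  linear_combination (z1 - 1) * (z2 - 1) * S.zbaradj_relation n +
    z1 * z2 * (Zsing (n + 1) (α ^ 2) y z1 * Zsing (n + 1) (α ^ 2) y z2 -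
      Zun (n + 1) (α ^ 2) y * Zbaradj (n + 1) (α ^ 2) y z1 z2) * S.fugacity_neg

end IsRefinedSpectrum

lemma IsFlatRatio.smul {u v t c : K} (h : IsFlatRatio τ u v t) (hc : c ≠ 0) :
    IsFlatRatio τ (c * u) (c * v) t := by
  have hb : bWeight τ (c * u) (c * v) = c * bWeight τ u v := by
    simp only [bWeight_eq]
    ring
  refine ⟨?_, ?_⟩
  · rw [hb]
    exact mul_ne_zero hc h.ne_zero
  · rw [hb]
    linear_combination c * h.flat

/-- The ratio `u / v` of the spectral parameters of a site at which the spectral weights `a` and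
`b` have ratio `t`. -/
def spectralRatio (τ t : K) : K := τ * (t - τ) / (τ * t - 1)

lemma isFlatRatio_spectralRatio {t : K} (hτ : τ ≠ 0) (hτ2 : τ ^ 2 ≠ 1) (ht : τ * t ≠ 1) :
    IsFlatRatio τ (spectralRatio τ t) 1 t := by
  have ht' := sub_ne_zero.2 ht
  have hb : bWeight τ (spectralRatio τ t) 1 = τ * (1 - τ ^ 2) / (τ * t - 1) := by
    rw [bWeight_eq, spectralRatio]
    field_simp
    ring
  refine ⟨?_, ?_⟩
  · rw [hb]
    exact div_ne_zero (mul_ne_zero hτ (sub_ne_zero.2 hτ2.symm)) ht'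
  · rw [hb, spectralRatio]
    field_simp
    ring

lemma neg_one_weight_spectralRatio (hατ : τ * α ≠ 1) (hy : y * τ = (α - τ) * (τ * α - 1)) :
    (1 - τ ^ 2) ^ 2 * spectralRatio τ α = bWeight τ (spectralRatio τ α) 1 ^ 2 * y := by
  have h := sub_ne_zero.2 hατ
  rw [bWeight_eq, spectralRatio]
  field_simp
  linear_combination -(τ * (1 - τ ^ 2) ^ 2) * hy

lemma isRefinedSpectrum_spectralRatio (hτ : τ ≠ 0) (hτ2 : τ ^ 2 ≠ 1) (hα : τ * α ≠ 1)
    (hz1 : τ * (α * z1) ≠ 1) (hz2 : τ * (α * z2) ≠ 1) (hr : spectralRatio τ α ≠ 0)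
    (hv : spectralRatio τ (α * z2) ≠ 0)
    (hcorner : spectralRatio τ (α * z1) ≠ spectralRatio τ α / spectralRatio τ (α * z2))
    (hy : y * τ = (α - τ) * (τ * α - 1)) :
    IsRefinedSpectrum τ (spectralRatio τ α) (spectralRatio τ (α * z1))
      (spectralRatio τ α / spectralRatio τ (α * z2)) α y z1 z2 where
  bulk := isFlatRatio_spectralRatio hτ hτ2 hα
  row := isFlatRatio_spectralRatio hτ hτ2 hz1
  col := by
    simpa [hv] using (isFlatRatio_spectralRatio hτ hτ2 hz2).smul (div_ne_zero hr hv)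
  corner := mul_ne_zero hτ (sub_ne_zero.2 hcorner)
  neg := neg_one_weight_spectralRatio hα hy

end Spectrum

section Real

variable {τ t α x y z1 z2 : ℝ}

lemma spectralRatio_neg (hτ : 0 < τ) (ht : t < τ) (htτ : 1 < τ * t) : spectralRatio τ t < 0 :=
  div_neg_of_neg_of_pos (mul_neg_of_pos_of_neg hτ (sub_neg.2 ht)) (sub_pos.2 htτ)

lemma spectralRatio_pos (hτ : 0 < τ) (ht : t < 0) : 0 < spectralRatio τ t :=
  div_pos_of_neg_of_neg (mul_neg_of_pos_of_neg hτ (by linarith)) (by nlinarith)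

lemma exists_spectralParameter (hα : 1 < α) (hy : y < 0) :
    ∃ τ, α < τ ∧ y * τ = (α - τ) * (τ * α - 1) := by
  have hdisc : (α ^ 2 - 1 + y) ^ 2 < (α ^ 2 + 1 - y) ^ 2 - 4 * α ^ 2 := by
    nlinarith [mul_pos (pow_pos (one_pos.trans hα) 2) (neg_pos.2 hy)]
  have hsq := Real.sq_sqrt ((sq_nonneg _).trans hdisc.le)
  have hlt := Real.lt_sqrt_of_sq_lt hdisc
  set s := √((α ^ 2 + 1 - y) ^ 2 - 4 * α ^ 2)
  refine ⟨(α ^ 2 + 1 - y + s) / (2 * α), ?_, ?_⟩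
  · rw [lt_div_iff₀ (by linarith)]
    linarith
  · field_simp
    linear_combination hsq

lemma recursionDefect_eq_zero_of_neg (hx : 1 < x) (hy : y < 0) (hz1 : z1 < 0) (hz2 : z2 < 0)
    (n : ℕ) : recursionDefect n x y z1 z2 = 0 := by
  obtain ⟨α, hα, rfl⟩ : ∃ α : ℝ, 1 < α ∧ α ^ 2 = x :=
    ⟨√x, Real.lt_sqrt_of_sq_lt (by simpa using hx), Real.sq_sqrt (by linarith)⟩
  obtain ⟨τ, hατ, hτy⟩ := exists_spectralParameter hα hy
  have hα0 : 0 < α := one_pos.trans hα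
  have hτ1 : 1 < τ := hα.trans hατ
  have hτ0 : 0 < τ := one_pos.trans hτ1
  have hαz1 : α * z1 < 0 := mul_neg_of_pos_of_neg hα0 hz1
  have hαz2 : α * z2 < 0 := mul_neg_of_pos_of_neg hα0 hz2
  have hατ1 : 1 < τ * α := one_lt_mul_of_lt_of_le hτ1 hα.le
  have hr := spectralRatio_neg hτ0 hατ hατ1
  have hus := spectralRatio_pos hτ0 hαz1
  have hus2 := spectralRatio_pos hτ0 hαz2
  have hvs := div_neg_of_neg_of_pos hr hus2
  have hne {t : ℝ} (ht : t < 0) : τ * t ≠ 1 := by nlinarith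
  exact (isRefinedSpectrum_spectralRatio hτ0.ne' (one_lt_pow₀ hτ1 two_ne_zero).ne' hατ1.ne'
    (hne hαz1) (hne hαz2) hr.ne hus2.ne' (hvs.trans hus).ne' hτy).recursionDefect_eq_zero
    (hr.trans hus).ne (hvs.trans one_pos).ne n

end Real

section Polynomial

lemma recursionDefect_X_real (n : ℕ) : recursionDefect n (MvPolynomial.X 0 : MvPolynomial (Fin 4) ℝ)
    (MvPolynomial.X 1) (MvPolynomial.X 2) (MvPolynomial.X 3) = 0 := by
  refine MvPolynomial.funext_set (![Set.Ioi 1, Set.Iio 0, Set.Iio 0, Set.Iio 0]) ?_ fun p hp => ?_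
  · simp [Fin.forall_fin_succ, Set.Ioi_infinite, Set.Iio_infinite]
  · simp only [Set.mem_pi, Set.mem_univ, true_imp_iff, Fin.forall_fin_succ] at hp
    obtain ⟨h0, h1, h2, h3, -⟩ := hp
    rw [map_recursionDefect, map_zero]
    simp only [MvPolynomial.eval_X]
    exact recursionDefect_eq_zero_of_neg h0 h1 h2 h3 n

lemma recursionDefect_X_int (n : ℕ) : recursionDefect n (MvPolynomial.X 0 : MvPolynomial (Fin 4) ℤ)
    (MvPolynomial.X 1) (MvPolynomial.X 2) (MvPolynomial.X 3) = 0 := by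
  refine MvPolynomial.map_injective (Int.castRingHom ℝ) Int.cast_injective ?_
  rw [map_recursionDefect, map_zero]
  simpa only [MvPolynomial.map_X] using recursionDefect_X_real n

theorem recursionDefect_eq_zero {R : Type*} [CommRing R] (n : ℕ) (x y z1 z2 : R) :
    recursionDefect n x y z1 z2 = 0 := by
  have h := congrArg (MvPolynomial.eval₂Hom (Int.castRingHom R) ![x, y, z1, z2])
    (recursionDefect_X_int n)
  rw [map_recursionDefect, map_zero] at h
  simpa using h

end Polynomial

end SixVertex

/-- Recursion for the alternative adjacent-boundary doubly-refined ASM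
generating function (the convention `Z_0(x,y) = 1` holds definitionally:
`Zun 0 x y = 1`), stated for all values of the variables in any commutative
ring, equivalently as an identity of polynomials in `ℤ[x,y,z1,z2]`. -/
theorem stmt3 {R : Type*} [CommRing R] (x y z1 z2 : R) (n : ℕ) (hn : 2 ≤ n) :
    (z1 - 1) * (z2 - 1) * Zbaradj n x y z1 z2 * Zun (n - 2) x y =
      y * z1 * z2 * Zbaradj (n - 1) x y z1 z2 * Zun (n - 1) x y
      + ((z1 - 1) * (z2 - 1) - y * z1 * z2) *
          Zsing (n - 1) x y z1 * Zsing (n - 1) x y z2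
      + (z1 - 1) * (z2 - 1) * (x * z1 * z2) ^ (n - 1) *
          Zun (n - 1) x y * Zun (n - 2) x y := by
  obtain ⟨m, rfl⟩ := Nat.exists_eq_add_of_le' hn
  exact sub_eq_zero.1 (SixVertex.recursionDefect_eq_zero m x y z1 z2)
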